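/- Let Ω = (0,1)×(−1,1) and let u ∈ A ∩ SBV_∞(Ω;ℝ²) be given by u(x) = R(x₂)x + ψ(x₂) a.e. with R(t) = R⁺ for t ∈ [0,1), R(t) = R⁻ for t ∈ (−1,0), ψ(t) = ψ⁺ for t ∈ [0,1), ψ(t) = ψ⁻ for t ∈ (−1,0), where R± ∈ SO(2) and ψ± ∈ ℝ². Then there exists a sequence (u_ε)_ε ⊂ W^{1,1}(Ω;ℝ²) with ∫_Ω u_ε dx = ∫_Ω u dx and u_ε ∈ A_ε for all ε, such that u_ε converges weakly* to u in BV(Ω;ℝ²). -/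

import Mathlib

open MeasureTheory Set Filter Topology
open scoped ENNReal

noncomputable section

/-- We identify `ℝ²` with maps `Fin 2 → ℝ`; `x 0` is the `x₁` coordinate and
`x 1` the `x₂` coordinate. -/
abbrev V2 := Fin 2 → ℝ

/-- `2 × 2` real matrices. -/
abbrev Mat2 := Matrix (Fin 2) (Fin 2) ℝ

/-- Proper rotations: `SO(2) = {R : R Rᵀ = 1, det R = 1}`. -/
def SO2 : Set Mat2 := {R | R * R.transpose = 1 ∧ R.det = 1}

def e1 : V2 := ![1, 0]
def e2 : V2 := ![0, 1]

/-- Euclidean norm on `ℝ²`. -/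
def vnorm (v : V2) : ℝ := Real.sqrt (v 0 ^ 2 + v 1 ^ 2)

/-- Frobenius norm on `2 × 2` matrices. -/
def mnorm (M : Mat2) : ℝ := Real.sqrt (∑ i, ∑ j, M i j ^ 2)

/-- Euclidean inner product on `ℝ²`. -/
def dot (v w : V2) : ℝ := ∑ i, v i * w i

/-- Tensor (outer) product `a ⊗ b = a bᵀ` of two vectors. -/
def outer (a b : V2) : Mat2 := Matrix.of fun i j => a i * b j

/-- Identification of `ℝ²` with the Euclidean space `EuclideanSpace ℝ (Fin 2)`. -/
def vToE (v : V2) : EuclideanSpace ℝ (Fin 2) := (EuclideanSpace.equiv (Fin 2) ℝ).symm v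

/-- Identification of `2×2` matrices with `EuclideanSpace ℝ (Fin 2 × Fin 2)`
(so that the induced norm is the Frobenius norm). -/
def mToE (M : Mat2) : EuclideanSpace ℝ (Fin 2 × Fin 2) :=
  (EuclideanSpace.equiv (Fin 2 × Fin 2) ℝ).symm fun p => M p.1 p.2

/-- A vector-valued function of one real variable has bounded variation on `s`
(with respect to the Euclidean norm). -/
def BVv (ψ : ℝ → V2) (s : Set ℝ) : Prop := BoundedVariationOn (fun t => vToE (ψ t)) s

/-- A matrix-valued function of one real variable has bounded variation on `s`
(with respect to the Frobenius norm). -/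
def BVm (R : ℝ → Mat2) (s : Set ℝ) : Prop := BoundedVariationOn (fun t => mToE (R t)) s

/-- Componentwise (a.e. pointwise) derivative of a vector-valued function of one variable.
For a one-dimensional `BV` function, the classical derivative exists a.e. and coincides with
the density of the absolutely continuous part of its distributional derivative
(the approximate derivative). -/
def vecDeriv (ψ : ℝ → V2) (t : ℝ) : V2 := fun i => deriv (fun s => ψ s i) t

/-- Componentwise derivative of a matrix-valued function of one variable. -/
def mDeriv (R : ℝ → Mat2) (t : ℝ) : Mat2 := Matrix.of fun i j => deriv (fun s => R s i j) t

/-- The rigid layers `ε Y_rig = {x : Int.fract (x₂/ε) ∈ [λ, 1)}` (1-periodic extension of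
`[0,1) × [λ,1)`, scaled by `ε`). -/
def rigid2 (lam ε : ℝ) : Set V2 := {x | lam ≤ Int.fract (x 1 / ε)}

/-- The one-dimensional rigid layers `ε I_rig`, where `I_rig` is the 1-periodic extension
of `[λ, 1)`. -/
def rigid1 (lam ε : ℝ) : Set ℝ := {t | lam ≤ Int.fract (t / ε)}

/-- `a_Ω = inf_{x ∈ Ω} x₂`. -/
def aOm (Ω : Set V2) : ℝ := sInf ((fun x : V2 => x 1) '' Ω)

/-- `b_Ω = sup_{x ∈ Ω} x₂`. -/
def bOm (Ω : Set V2) : ℝ := sSup ((fun x : V2 => x 1) '' Ω)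

/-- `Ω` is `x₁`-connected: every horizontal slice is a (possibly empty) interval. -/
def X1Connected (Ω : Set V2) : Prop := ∀ t : ℝ, OrdConnected {s : ℝ | ![s, t] ∈ Ω}

/-- A (nonempty) bounded Lipschitz domain: near every boundary point, after a rotation,
`Ω` is the region above the graph of a Lipschitz function. -/
def IsLipschitzDomain (Ω : Set V2) : Prop :=
  IsOpen Ω ∧ Ω.Nonempty ∧ Bornology.IsBounded Ω ∧
    ∀ x ∈ frontier Ω, ∃ Q ∈ SO2, ∃ L : NNReal, ∃ f : ℝ → ℝ, ∃ r : ℝ, 0 < r ∧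
      LipschitzWith L f ∧ ∀ y ∈ Metric.ball x r, (y ∈ Ω ↔ f (Q.mulVec y 0) < Q.mulVec y 1)

/-- Partial derivative `∂_j φ` of a scalar test function. -/
def pd (j : Fin 2) (φ : V2 → ℝ) (x : V2) : ℝ := fderiv ℝ φ x (Pi.single j 1)

/-- Componentwise integrability of a matrix-valued map. -/
def IntegrableOnM (g : V2 → Mat2) (Ω : Set V2) : Prop :=
  ∀ i j, IntegrableOn (fun x => g x i j) Ω volume

/-- `u ∈ W^{1,1}(Ω;ℝ²)` with weak gradient `gu`, expressed through integration by parts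
against smooth compactly supported test functions. -/
structure IsSobolev11On (Ω : Set V2) (u : V2 → V2) (gu : V2 → Mat2) : Prop where
  int_u : IntegrableOn u Ω volume
  int_gu : IntegrableOnM gu Ω
  ibp : ∀ φ : V2 → ℝ, ContDiff ℝ (⊤ : ℕ∞) φ → HasCompactSupport φ → tsupport φ ⊆ Ω →
    ∀ i j, ∫ x in Ω, u x i * pd j φ x = - ∫ x in Ω, φ x * gu x i j

/-- `u ∈ BV(Ω;ℝ²)`, with distributional derivative `Du = gu · L² + gs · σ`.
Here `gu` is the approximate differential (density of the absolutely continuous part),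
`σ = |D^s u|` is the total variation measure of the singular part (a finite measure,
concentrated on `Ω` and singular with respect to Lebesgue measure), and `gs` is the
polar density of the singular part, of unit Frobenius norm `σ`-a.e. -/
structure HasBVDerivOn (Ω : Set V2) (u : V2 → V2) (gu : V2 → Mat2)
    (σ : Measure V2) (gs : V2 → Mat2) : Prop where
  int_u : IntegrableOn u Ω volume
  int_gu : IntegrableOnM gu Ω
  fin : σ Set.univ ≠ ⊤
  conc : σ Ωᶜ = 0
  perp : σ ⟂ₘ (volume : Measure V2)
  meas_gs : ∀ i j, AEMeasurable (fun x => gs x i j) σ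
  unit : ∀ᵐ x ∂σ, mnorm (gs x) = 1
  ibp : ∀ φ : V2 → ℝ, ContDiff ℝ (⊤ : ℕ∞) φ → HasCompactSupport φ → tsupport φ ⊆ Ω →
    ∀ i j, ∫ x in Ω, u x i * pd j φ x
        = (- ∫ x in Ω, φ x * gu x i j) - ∫ x, φ x * gs x i j ∂σ

/-- `L¹(Ω;ℝ²)` convergence of a sequence. -/
def L1ConvOn (Ω : Set V2) (un : ℕ → V2 → V2) (u : V2 → V2) : Prop :=
  Tendsto (fun n => ∫ x in Ω, vnorm (un n x - u x)) atTop (𝓝 0)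

/-- Weak* convergence of the measures `gn n · L²∟Ω` to `gu · L²∟Ω + gs · σ`
in `M(Ω; ℝ^{2×2})`, tested against continuous functions compactly supported in `Ω`. -/
def MeasConv (Ω : Set V2) (gn : ℕ → V2 → Mat2) (gu : V2 → Mat2)
    (σ : Measure V2) (gs : V2 → Mat2) : Prop :=
  ∀ φ : V2 → ℝ, Continuous φ → HasCompactSupport φ → tsupport φ ⊆ Ω → ∀ i j,
    Tendsto (fun n => ∫ x in Ω, φ x * gn n x i j) atTop
      (𝓝 ((∫ x in Ω, φ x * gu x i j) + ∫ x, φ x * gs x i j ∂σ))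

/-- Weak* convergence in `BV(Ω;ℝ²)` of a sequence of `W^{1,1}` maps to a `BV` limit:
`L¹` convergence together with weak* convergence of the derivative measures. -/
def WeakStarToBV (Ω : Set V2) (un : ℕ → V2 → V2) (u : V2 → V2) : Prop :=
  ∃ gu σ gs, HasBVDerivOn Ω u gu σ gs ∧ L1ConvOn Ω un u ∧
    ∀ gn : ℕ → V2 → Mat2, (∀ n, IsSobolev11On Ω (un n) (gn n)) → MeasConv Ω gn gu σ gs

/-- `u ∈ A_ε`, witnessed by the data `R ∈ L^∞(Ω;SO(2))` and `γ ∈ L¹(Ω)`: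
`u ∈ W^{1,1}(Ω;ℝ²)` with `∇u = R (I + γ e₁⊗e₂)` a.e. and `γ = 0` a.e. on `εY_rig ∩ Ω`. -/
structure MemAeps (Ω : Set V2) (lam ε : ℝ) (u : V2 → V2)
    (R : V2 → Mat2) (γ : V2 → ℝ) : Prop where
  so2 : ∀ᵐ x ∂(volume.restrict Ω), R x ∈ SO2
  int_γ : IntegrableOn γ Ω volume
  sob : IsSobolev11On Ω u fun x => R x * (1 + γ x • outer e1 e2)
  rig : ∀ᵐ x ∂(volume.restrict (Ω ∩ rigid2 lam ε)), γ x = 0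

/-- The elastoplastic energy `E_ε(u) = ∫_Ω |γ| dx` for `u ∈ A_ε`, `∞` otherwise,
as an `ℝ≥0∞`-valued functional (the decomposition data is essentially unique). -/
def Eeps (Ω : Set V2) (lam ε : ℝ) (u : V2 → V2) : ℝ≥0∞ :=
  sInf {c | ∃ R γ, MemAeps Ω lam ε u R γ ∧ c = ∫⁻ x in Ω, ENNReal.ofReal |γ x|}

/-- `u ∈ A` relative to the vertical interval `(a, b)`:
`u ∈ BV(Ω;ℝ²)` with `u(x) = R(x₂)x + ψ(x₂)` a.e., `R ∈ BV(a,b;SO(2))`,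
`ψ ∈ BV(a,b;ℝ²)` and `det ∇u = 1` a.e. in `Ω`. -/
def memAOn (Ω : Set V2) (a b : ℝ) (u : V2 → V2) : Prop :=
  ∃ gu σ gs, HasBVDerivOn Ω u gu σ gs ∧
    (∃ R : ℝ → Mat2, ∃ ψ : ℝ → V2, (∀ t ∈ Ioo a b, R t ∈ SO2) ∧
      BVm R (Ioo a b) ∧ BVv ψ (Ioo a b) ∧
      ∀ᵐ x ∂(volume.restrict Ω), u x = (R (x 1)).mulVec x + ψ (x 1)) ∧
    ∀ᵐ x ∂(volume.restrict Ω), (gu x).det = 1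

/-- `u ∈ A`. -/
def memA (Ω : Set V2) (u : V2 → V2) : Prop := memAOn Ω (aOm Ω) (bOm Ω) u

/-- `u ∈ A∥` relative to the vertical interval `(a,b)`:
`u(x) = Rx + ϑ(x₂) R e₁ + c` a.e. with a constant rotation `R ∈ SO(2)`,
`ϑ ∈ BV(a,b)` and `c ∈ ℝ²`. -/
def memAparOn (Ω : Set V2) (a b : ℝ) (u : V2 → V2) : Prop :=
  ∃ R ∈ SO2, ∃ ϑ : ℝ → ℝ, ∃ c : V2, BoundedVariationOn ϑ (Ioo a b) ∧
    ∀ᵐ x ∂(volume.restrict Ω), u x = R.mulVec x + ϑ (x 1) • R.mulVec e1 + c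

/-- `u ∈ A∥`. -/
def memApar (Ω : Set V2) (u : V2 → V2) : Prop := memAparOn Ω (aOm Ω) (bOm Ω) u

/-- The limit energy `E(u) = ∫_Ω |ψ'·Re₁| dx + |D^s u|(Ω)` for `u ∈ A`, `∞` otherwise. -/
def Efun (Ω : Set V2) (u : V2 → V2) : ℝ≥0∞ :=
  sInf {c | ∃ gu σ gs, HasBVDerivOn Ω u gu σ gs ∧
    ∃ R : ℝ → Mat2, ∃ ψ : ℝ → V2,
      (∀ t ∈ Ioo (aOm Ω) (bOm Ω), R t ∈ SO2) ∧ BVm R (Ioo (aOm Ω) (bOm Ω)) ∧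
      BVv ψ (Ioo (aOm Ω) (bOm Ω)) ∧
      (∀ᵐ x ∂(volume.restrict Ω), u x = (R (x 1)).mulVec x + ψ (x 1)) ∧
      (∀ᵐ x ∂(volume.restrict Ω), (gu x).det = 1) ∧
      c = (∫⁻ x in Ω, ENNReal.ofReal |dot (vecDeriv ψ (x 1)) ((R (x 1)).mulVec e1)|)
          + σ Set.univ}

/-- The limit energy on `A∥`: `E(u) = ∫_Ω |ϑ'(x₂)| dx + |D^s u|(Ω)` for `u ∈ A∥`,
`∞` otherwise. -/
def EparFun (Ω : Set V2) (u : V2 → V2) : ℝ≥0∞ :=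
  sInf {c | ∃ gu σ gs, HasBVDerivOn Ω u gu σ gs ∧
    ∃ R ∈ SO2, ∃ ϑ : ℝ → ℝ, ∃ c0 : V2, BoundedVariationOn ϑ (Ioo (aOm Ω) (bOm Ω)) ∧
      (∀ᵐ x ∂(volume.restrict Ω), u x = R.mulVec x + ϑ (x 1) • R.mulVec e1 + c0) ∧
      c = (∫⁻ x in Ω, ENNReal.ofReal |deriv ϑ (x 1)|) + σ Set.univ}

/-- The regularized limit energy `E^δ(u) = ∫_Ω |ϑ'| dx + |D^s u|(Ω) + δ|Ω|` on `A∥`,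
`∞` otherwise. -/
def EDelta (Ω : Set V2) (δ : ℝ) (u : V2 → V2) : ℝ≥0∞ :=
  EparFun Ω u + ENNReal.ofReal δ * volume Ω

/-- `‖v‖_{W^{1,p}(Ω;ℝ²)}^p = ∫_Ω |v|^p + ∫_Ω |Dv|^p` for a map `v` with weak Jacobian `G`. -/
def Wp1 (p : ℝ) (Ω : Set V2) (v : V2 → V2) (G : V2 → Mat2) : ℝ≥0∞ :=
  (∫⁻ x in Ω, ENNReal.ofReal (vnorm (v x) ^ p)) + ∫⁻ x in Ω, ENNReal.ofReal (mnorm (G x) ^ p)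

/-- The regularized energy
`E^δ_ε(u) = ∫_Ω |γ| dx + δ ‖∂₁ u‖_{W^{1,p}(Ω;ℝ²)}^p` for `u ∈ A_ε` with
`∂₁u = R e₁ ∈ W^{1,p}(Ω;ℝ²)`, and `∞` otherwise. -/
def EepsDelta (Ω : Set V2) (lam ε δ p : ℝ) (u : V2 → V2) : ℝ≥0∞ :=
  sInf {c | ∃ R γ, MemAeps Ω lam ε u R γ ∧
    ∃ G : V2 → Mat2, IsSobolev11On Ω (fun x => (R x).mulVec e1) G ∧
      c = (∫⁻ x in Ω, ENNReal.ofReal |γ x|) +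
          ENNReal.ofReal δ * Wp1 p Ω (fun x => (R x).mulVec e1) G}

/-- `x` is an approximate jump point of `u`, with one-sided approximate limits `a ≠ b`
relative to a unit normal `ν`. -/
def JumpPt (u : V2 → V2) (x : V2) : Prop :=
  ∃ a b ν : V2, a ≠ b ∧ vnorm ν = 1 ∧
    Tendsto (fun r : ℝ =>
        (∫⁻ z in {z | z ∈ Metric.ball x r ∧ 0 < dot (z - x) ν},
            ENNReal.ofReal (vnorm (u z - a))) / volume (Metric.ball x r))
      (𝓝[>] 0) (𝓝 0) ∧
    Tendsto (fun r : ℝ =>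
        (∫⁻ z in {z | z ∈ Metric.ball x r ∧ dot (z - x) ν < 0},
            ENNReal.ofReal (vnorm (u z - b))) / volume (Metric.ball x r))
      (𝓝[>] 0) (𝓝 0)

/-- The jump set `J_u` of `u` in `Ω`. -/
def jumpSet (Ω : Set V2) (u : V2 → V2) : Set V2 := {x ∈ Ω | JumpPt u x}

/-- `u ∈ SBV_∞(Ω;ℝ²)`: `u ∈ BV` with singular part concentrated on the jump set
(no Cantor part), `∇u ∈ L^∞(Ω;ℝ^{2×2})` and `H¹(J_u) < ∞`. -/
def memSBVinf (Ω : Set V2) (u : V2 → V2) : Prop :=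
  ∃ gu σ gs, HasBVDerivOn Ω u gu σ gs ∧
    σ {x | ¬ JumpPt u x} = 0 ∧
    (∃ M : ℝ, ∀ᵐ x ∂(volume.restrict Ω), mnorm (gu x) ≤ M) ∧
    Measure.hausdorffMeasure (1 : ℝ) (jumpSet Ω u) ≠ ⊤

/-- Piecewise constant functions on `(a,b)` with finitely many jumps
(the class `PC(a,b)`). -/
def PCOn {α : Type*} (a b : ℝ) (f : ℝ → α) : Prop :=
  ∃ S : Finset ℝ, ∀ s₁ ∈ Ioo a b, ∀ s₂ ∈ Ioo a b, s₁ ≤ s₂ →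
    (∀ r ∈ S, r ∉ Icc s₁ s₂) → f s₁ = f s₂

/-- Piecewise Lipschitz functions on `(a,b)` with finitely many jump points:
the class `SBV_∞(a,b;ℝ²)` of one-dimensional special functions of bounded variation
with bounded derivative and finitely many jumps. -/
def PLipOn (a b : ℝ) (f : ℝ → V2) : Prop :=
  ∃ S : Finset ℝ, ∃ L : ℝ, 0 ≤ L ∧ ∀ s₁ ∈ Ioo a b, ∀ s₂ ∈ Ioo a b, s₁ ≤ s₂ →
    (∀ r ∈ S, r ∉ Icc s₁ s₂) → vnorm (f s₂ - f s₁) ≤ L * (s₂ - s₁)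

/-- The rectangle `Ω = (0,1) × (−1,1)`. -/
def Rect : Set V2 := {x | x 0 ∈ Ioo (0:ℝ) 1 ∧ x 1 ∈ Ioo (-1:ℝ) 1}

/-- `f ∈ W^{1,1}(a,b)`: `f` has an integrable weak derivative on `(a,b)`
(absolutely continuous representative). -/
def IsW11On (f : ℝ → ℝ) (a b : ℝ) : Prop :=
  ∃ g : ℝ → ℝ, IntegrableOn g (Ioo a b) volume ∧
    ∀ s ∈ Ioo a b, ∀ t ∈ Ioo a b, f t - f s = ∫ r in s..t, g r

/-! The jump is smeared out over a stack of four horizontal layers of thickness `h`, which fits into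
the soft strip `0 ≤ x₂ < λε` as soon as `4h ≤ λε`. Below and above the stack the deformation is a
rigid motion with rotation `R⁻` and `R⁺`, respectively. In a layer sheared by an amount of order
`1 / h` along a rotated `e₁`, the displacement changes by a vector of order one. Across the diagonal
of a layer two rotations that are not opposite can be joined compatibly, and passing through an
intermediate `M` whose axis `M e₁` is orthogonal to `R⁺ e₁` makes two independent directions of slip
available, so that the total displacement can be any prescribed jump. The gradients are of order
`1 / h` on a set of measure of order `h`, hence bounded in `L¹`, while the deformations are bounded
and converge pointwise off the jump line; together this is weak* convergence in `BV`. Constants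
tending to zero correct the mean values.
-/

section StepFunctions

variable {E : Type*} [NormedAddCommGroup E]

lemma intervalIntegrable_comp_floor (c : ℤ → E) (a b : ℝ) :
    IntervalIntegrable (fun r => c ⌊r⌋) volume a b := by
  have hmeas : StronglyMeasurable fun r : ℝ => c ⌊r⌋ :=
    StronglyMeasurable.of_discrete.comp_measurable Int.measurable_floor
  refine (intervalIntegrable_const (c := ∑ k ∈ Finset.Icc ⌊min a b⌋ ⌊max a b⌋, ‖c k‖)).mono_fun'
    hmeas.aestronglyMeasurable ?_
  refine (ae_restrict_iff' measurableSet_uIoc).2 (ae_of_all _ fun r hr => ?_)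
  exact Finset.single_le_sum (f := fun k => ‖c k‖) (fun _ _ => norm_nonneg _)
    (Finset.mem_Icc.2 ⟨Int.floor_mono hr.1.le, Int.floor_mono hr.2⟩)

variable [NormedSpace ℝ E]

/-- The piecewise affine primitive, vanishing at `0`, of the step function with value `c k` on
`[k, k + 1)`. -/
def stepPrimitive (c : ℤ → E) (t : ℝ) : E := ∫ r in (0 : ℝ)..t, c ⌊r⌋

lemma stepPrimitive_sub (c : ℤ → E) (s t : ℝ) :
    stepPrimitive c t - stepPrimitive c s = ∫ r in s..t, c ⌊r⌋ :=
  intervalIntegral.integral_interval_sub_left (intervalIntegrable_comp_floor c _ _)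
    (intervalIntegrable_comp_floor c _ _)

lemma stepPrimitive_add (c d : ℤ → E) (t : ℝ) :
    stepPrimitive (c + d) t = stepPrimitive c t + stepPrimitive d t :=
  intervalIntegral.integral_add (intervalIntegrable_comp_floor c _ _)
    (intervalIntegrable_comp_floor d _ _)

lemma norm_stepPrimitive_sub_le {c : ℤ → E} {C : ℝ} (hc : ∀ k, ‖c k‖ ≤ C) (s t : ℝ) :
    ‖stepPrimitive c t - stepPrimitive c s‖ ≤ C * |t - s| := by
  rw [stepPrimitive_sub]
  exact intervalIntegral.norm_integral_le_of_norm_le_const fun r _ => hc ⌊r⌋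

lemma norm_stepPrimitive_le {c : ℤ → E} {C : ℝ} (hc : ∀ k, ‖c k‖ ≤ C) (t : ℝ) :
    ‖stepPrimitive c t‖ ≤ C * |t| := by
  simpa [stepPrimitive] using norm_stepPrimitive_sub_le hc 0 t

lemma exists_lipschitzWith_stepPrimitive {c : ℤ → E} {C : ℝ} (hc : ∀ k, ‖c k‖ ≤ C) :
    ∃ K, LipschitzWith K (stepPrimitive c) :=
  ⟨C.toNNReal, LipschitzWith.of_dist_le' fun s t => by
    simpa only [dist_eq_norm, Real.norm_eq_abs] using norm_stepPrimitive_sub_le hc t s⟩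

variable [CompleteSpace E]

lemma hasDerivAt_stepPrimitive (c : ℤ → E) {t : ℝ} (ht : t ∉ range ((↑) : ℤ → ℝ)) :
    HasDerivAt (stepPrimitive c) (c ⌊t⌋) t := by
  have hlocal : (fun r => c ⌊r⌋) =ᶠ[𝓝 t] fun _ => c ⌊t⌋ := by
    filter_upwards [Ioo_mem_nhds (Int.floor_lt_self_iff.2 ht) (Int.lt_floor_add_one t)] with r hr
    rw [Int.floor_eq_iff.2 ⟨hr.1.le, hr.2⟩]
  exact intervalIntegral.integral_hasDerivAt_right (intervalIntegrable_comp_floor c 0 t)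
    (StronglyMeasurable.of_discrete.comp_measurable
      Int.measurable_floor).stronglyMeasurableAtFilter
    (continuousAt_const.congr hlocal.symm)

lemma stepPrimitive_sub_eq_smul (c : ℤ → E) {d : E} {s t : ℝ} (hst : s ≤ t)
    (hd : ∀ r ∈ Ioo s t, c ⌊r⌋ = d) : stepPrimitive c t - stepPrimitive c s = (t - s) • d := by
  rw [stepPrimitive_sub, intervalIntegral.integral_of_le hst, integral_Ioc_eq_integral_Ioo,
    setIntegral_congr_fun measurableSet_Ioo hd]
  simp [hst]

lemma stepPrimitive_natCast (c : ℤ → E) (N : ℕ) :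
    stepPrimitive c N = ∑ k ∈ Finset.range N, c k := by
  have hzero : stepPrimitive c (0 : ℕ) = 0 := by simp [stepPrimitive]
  rw [← sub_zero (stepPrimitive c N), ← hzero,
    ← Finset.sum_range_sub fun k : ℕ => stepPrimitive c (k : ℝ)]
  refine Finset.sum_congr rfl fun k _ => ?_
  rw [stepPrimitive_sub_eq_smul (d := c k) c (by simp) fun r hr => ?_]
  · simp
  · rw [Int.floor_eq_iff.2 ⟨by exact_mod_cast hr.1.le, by exact_mod_cast hr.2⟩]

lemma norm_stepPrimitive_le_of_support {c : ℤ → E} {C : ℝ} {N : ℕ} (hc : ∀ k, ‖c k‖ ≤ C)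
    (hsupp : ∀ k ∉ Ico 0 (N : ℤ), c k = 0) (t : ℝ) : ‖stepPrimitive c t‖ ≤ C * N := by
  have hC : 0 ≤ C := (norm_nonneg _).trans (hc 0)
  rcases le_total t 0 with ht | ht
  · have h := stepPrimitive_sub_eq_smul c ht fun r hr =>
      hsupp _ fun h => (Int.floor_lt.2 (by simpa using hr.2)).not_ge h.1
    have hzero : stepPrimitive c t = 0 := by simpa [stepPrimitive] using h
    simpa [hzero] using by positivity
  · rcases le_total t N with htN | htN
    · refine (norm_stepPrimitive_le hc t).trans ?_
      rw [abs_of_nonneg ht]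
      gcongr
    · have h := stepPrimitive_sub_eq_smul c htN fun r hr =>
        hsupp _ fun h => (Int.floor_lt.1 h.2).not_ge (by simpa using hr.1.le)
      rw [smul_zero, sub_eq_zero] at h
      simpa [h] using norm_stepPrimitive_le hc N

end StepFunctions

section Rotations

lemma mem_SO2_iff {R : Mat2} :
    R ∈ SO2 ↔ R 1 1 = R 0 0 ∧ R 0 1 = -R 1 0 ∧ R 0 0 ^ 2 + R 1 0 ^ 2 = 1 := by
  have hSO2 : R ∈ SO2 ↔ R ∈ Matrix.specialOrthogonalGroup (Fin 2) ℝ := by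
    rw [Matrix.mem_specialOrthogonalGroup_iff, Matrix.mem_orthogonalGroup_iff]
    rfl
  rw [hSO2, Matrix.mem_specialOrthogonalGroup_fin_two_iff]
  grind

lemma abs_apply_le_one_of_mem_SO2 {R : Mat2} (hR : R ∈ SO2) (i j : Fin 2) : |R i j| ≤ 1 :=
  entry_norm_bound_of_unitary (Matrix.mem_unitaryGroup_iff.2 hR.1) i j

lemma mulVec_e1_apply (R : Mat2) (i : Fin 2) : R.mulVec e1 i = R i 0 := by
  simp [e1, Matrix.mulVec, dotProduct, Fin.sum_univ_two]

lemma mulVec_e2_apply (R : Mat2) (i : Fin 2) : R.mulVec e2 i = R i 1 := by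
  simp [e2, Matrix.mulVec, dotProduct, Fin.sum_univ_two]

lemma norm_mulVec_e1_le_one {R : Mat2} (hR : R ∈ SO2) : ‖R.mulVec e1‖ ≤ 1 :=
  (pi_norm_le_iff_of_nonneg zero_le_one).2 fun i => by
    simpa only [mulVec_e1_apply, Real.norm_eq_abs] using abs_apply_le_one_of_mem_SO2 hR i 0

lemma norm_mulVec_e2_le_one {R : Mat2} (hR : R ∈ SO2) : ‖R.mulVec e2‖ ≤ 1 :=
  (pi_norm_le_iff_of_nonneg zero_le_one).2 fun i => by
    simpa only [mulVec_e2_apply, Real.norm_eq_abs] using abs_apply_le_one_of_mem_SO2 hR i 1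

lemma mulVec_eq_smul_add_smul (R : Mat2) (v : V2) :
    R.mulVec v = v 0 • R.mulVec e1 + v 1 • R.mulVec e2 := by
  ext i
  simp only [Pi.add_apply, Pi.smul_apply, smul_eq_mul, mulVec_e1_apply, mulVec_e2_apply]
  simp only [Matrix.mulVec, dotProduct, Fin.sum_univ_two]
  ring

lemma exists_tilt_matching {A S : Mat2} (hA : A ∈ SO2) (hS : S ∈ SO2) (hne : S ≠ -A) :
    ∃ τ : ℝ, A.mulVec e2 - τ • A.mulVec e1 = S.mulVec e2 + τ • S.mulVec e1 := by
  obtain ⟨hA11, hA01, hA1⟩ := mem_SO2_iff.1 hA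
  obtain ⟨hS11, hS01, hS1⟩ := mem_SO2_iff.1 hS
  have hdenom : 1 + (A 0 0 * S 0 0 + A 1 0 * S 1 0) ≠ 0 := by
    refine fun h0 => hne ?_
    have hsum : (S 0 0 + A 0 0) ^ 2 + (S 1 0 + A 1 0) ^ 2 = 0 := by linarith
    have h00 : S 0 0 = -A 0 0 := by nlinarith [hsum, sq_nonneg (S 1 0 + A 1 0)]
    have h10 : S 1 0 = -A 1 0 := by nlinarith [hsum, sq_nonneg (S 0 0 + A 0 0)]
    ext i j
    fin_cases i <;> fin_cases j <;> simp [hA11, hA01, hS11, hS01, h00, h10]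
  -- The witness is `tan (θ / 2)`, where `θ` is the angle from `A` to `S`.
  refine ⟨(A 0 0 * S 1 0 - A 1 0 * S 0 0) / (1 + (A 0 0 * S 0 0 + A 1 0 * S 1 0)), ?_⟩
  ext i
  fin_cases i <;>
    simp only [Pi.sub_apply, Pi.add_apply, Pi.smul_apply, smul_eq_mul, mulVec_e1_apply,
      mulVec_e2_apply, Fin.zero_eta, Fin.mk_one, hA11, hA01, hS11, hS01] <;>
    field_simp <;> grind

lemma neg_mem_SO2 {R : Mat2} (hR : R ∈ SO2) : -R ∈ SO2 :=
  ⟨by simpa using hR.1, by simpa [Matrix.det_neg] using hR.2⟩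

lemma dot_mulVec_e1_self {R : Mat2} (hR : R ∈ SO2) : dot (R.mulVec e1) (R.mulVec e1) = 1 := by
  simp only [dot, Fin.sum_univ_two, mulVec_e1_apply, ← (mem_SO2_iff.1 hR).2.2]
  ring

lemma exists_rotation_dot_eq_zero (A : Mat2) {B : Mat2} (hB : B ∈ SO2) :
    ∃ S ∈ SO2, S ≠ -A ∧ dot (S.mulVec e1) (B.mulVec e1) = 0 := by
  obtain ⟨_, _, hB1⟩ := mem_SO2_iff.1 hB
  let Q : Mat2 := !![-B 1 0, -B 0 0; B 0 0, -B 1 0]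
  have hQ : Q ∈ SO2 := mem_SO2_iff.2 ⟨rfl, rfl, by simpa [Q, add_comm] using hB1⟩
  have hdot : dot (Q.mulVec e1) (B.mulVec e1) = 0 := by
    simp only [dot, Fin.sum_univ_two, mulVec_e1_apply, Q, Matrix.of_apply, Matrix.cons_val',
      Matrix.cons_val_zero, Matrix.cons_val_one, Matrix.cons_val_fin_one]
    ring
  by_cases hQA : Q = -A
  · refine ⟨-Q, neg_mem_SO2 hQ, fun h => ?_, ?_⟩
    · have hQ0 : Q = 0 := by
        ext i j
        exact self_eq_neg.1 (congrFun₂ (hQA.trans h.symm) i j)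
      simpa [hQ0] using hQ.2
    · simp only [dot, Fin.sum_univ_two, Matrix.neg_mulVec, Pi.neg_apply] at hdot ⊢
      linarith
  · exact ⟨Q, hQ, hQA, hdot⟩

lemma eq_dot_smul_add_dot_smul {v w : V2} (hv : dot v v = 1) (hw : dot w w = 1)
    (hvw : dot v w = 0) (z : V2) : z = dot z v • v + dot z w • w := by
  simp only [dot, Fin.sum_univ_two] at hv hw hvw ⊢
  ext i
  simp only [Pi.add_apply, Pi.smul_apply, smul_eq_mul]
  fin_cases i <;> grind

end Rotations

section TestFunctions

variable {Ω : Set V2} {φ : V2 → ℝ}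

lemma continuous_pd (hφ : ContDiff ℝ 1 φ) (j : Fin 2) : Continuous (pd j φ) :=
  (hφ.continuous_fderiv one_ne_zero).clm_apply continuous_const

lemma hasCompactSupport_pd (hc : HasCompactSupport φ) (j : Fin 2) : HasCompactSupport (pd j φ) :=
  hc.fderiv_apply ℝ _

lemma pd_eq_zero_of_notMem (hs : tsupport φ ⊆ Ω) {x : V2} (hx : x ∉ Ω) (j : Fin 2) :
    pd j φ x = 0 := by
  rw [pd, fderiv_of_notMem_tsupport ℝ fun h => hx (hs h), zero_apply]

lemma setIntegral_mul_pd (hs : tsupport φ ⊆ Ω) (f : V2 → ℝ) (j : Fin 2) :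
    ∫ x in Ω, f x * pd j φ x = ∫ x, f x * pd j φ x :=
  setIntegral_eq_integral_of_forall_compl_eq_zero fun x hx => by
    rw [pd_eq_zero_of_notMem hs hx, mul_zero]

lemma setIntegral_testFunction_mul (hs : tsupport φ ⊆ Ω) (f : V2 → ℝ) :
    ∫ x in Ω, φ x * f x = ∫ x, φ x * f x :=
  setIntegral_eq_integral_of_forall_compl_eq_zero fun x hx => by
    rw [image_eq_zero_of_notMem_tsupport fun h => hx (hs h), zero_mul]

lemma isSobolev11On_of_lipschitzWith {w : V2 → V2} {g : V2 → Mat2} {K : NNReal}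
    (hw : LipschitzWith K w) (hintegrable : IntegrableOn w Ω) (hg : IntegrableOnM g Ω)
    (hderiv : ∀ᵐ x, x ∈ Ω → ∀ j, HasLineDerivAt ℝ w ((g x).col j) x (Pi.single j 1)) :
    IsSobolev11On Ω w g := by
  refine ⟨hintegrable, hg, fun φ hφ hc hs i j => ?_⟩
  have hφ1 : ContDiff ℝ 1 φ := hφ.of_le (by norm_cast)
  obtain ⟨D, hD⟩ := hφ1.lipschitzWith_of_hasCompactSupport hc one_ne_zero
  have hparts : ∫ x, lineDeriv ℝ (fun x => w x i) x (Pi.single j 1) * φ x =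
      ∫ x, lineDeriv ℝ φ x (-Pi.single j 1) * w x i :=
    ((LipschitzWith.eval i).comp hw).integral_lineDeriv_mul_eq hD hc (Pi.single j 1)
  have hleft : ∫ x, lineDeriv ℝ (fun x => w x i) x (Pi.single j 1) * φ x =
      ∫ x, φ x * g x i j := by
    refine integral_congr_ae ?_
    filter_upwards [hderiv] with x hx
    by_cases hxΩ : x ∈ Ω
    · have hxi : HasLineDerivAt ℝ (fun x => w x i) (g x i j) x (Pi.single j 1) :=
        hasDerivAt_pi.1 (hx hxΩ j) i
      rw [hxi.lineDeriv, mul_comm]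
    · simp [image_eq_zero_of_notMem_tsupport fun h => hxΩ (hs h)]
  have hright : ∀ x, lineDeriv ℝ φ x (-Pi.single j 1) * w x i = -(w x i * pd j φ x) := by
    intro x
    rw [(hφ1.differentiable one_ne_zero x).lineDeriv_eq_fderiv, map_neg, pd]
    ring
  rw [setIntegral_mul_pd hs (fun x => w x i), setIntegral_testFunction_mul hs fun x => g x i j,
    ← hleft, hparts, ← integral_neg]
  simp only [hright, neg_neg]

end TestFunctions

section ShearedRotation

lemma mul_one_add_smul_outer_apply (R : Mat2) (γ : ℝ) (i j : Fin 2) :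
    (R * (1 + γ • outer e1 e2)) i j = R i j + γ * (R i 0 * e2 j) := by
  have houter : (R * outer e1 e2) i j = R i 0 * e2 j := by
    simp [Matrix.mul_apply, outer, e1, Fin.sum_univ_two]
  rw [Matrix.mul_add, Matrix.mul_one, Matrix.mul_smul, Matrix.add_apply, Matrix.smul_apply,
    smul_eq_mul, houter]

lemma mul_one_add_smul_outer_col_zero (R : Mat2) (γ : ℝ) :
    (R * (1 + γ • outer e1 e2)).col 0 = R.mulVec e1 := by
  ext i
  rw [Matrix.col_apply, mul_one_add_smul_outer_apply, mulVec_e1_apply]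
  simp [e2]

lemma mul_one_add_smul_outer_col_one (R : Mat2) (γ : ℝ) :
    (R * (1 + γ • outer e1 e2)).col 1 = R.mulVec e2 + γ • R.mulVec e1 := by
  ext i
  simp only [Matrix.col_apply, mul_one_add_smul_outer_apply, Pi.add_apply, Pi.smul_apply,
    mulVec_e1_apply, mulVec_e2_apply, smul_eq_mul]
  simp [e2]

lemma abs_mul_one_add_smul_outer_apply_le {R : Mat2} (hR : R ∈ SO2) (γ : ℝ) (i j : Fin 2) :
    |(R * (1 + γ • outer e1 e2)) i j| ≤ 1 + |γ| := by
  have he2 : |e2 j| ≤ 1 := by fin_cases j <;> simp [e2]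
  rw [mul_one_add_smul_outer_apply]
  calc |R i j + γ * (R i 0 * e2 j)| ≤ |R i j| + |γ| * (|R i 0| * |e2 j|) := by
        simpa only [abs_mul] using abs_add_le (R i j) (γ * (R i 0 * e2 j))
    _ ≤ 1 + |γ| * (1 * 1) := by gcongr <;> exact abs_apply_le_one_of_mem_SO2 hR _ _
    _ = 1 + |γ| := by ring

end ShearedRotation

/-- A finite stack of horizontal layers, the `k`-th one being `{k ≤ x₂ / h < k + 1}` once a layer
thickness `h` is chosen. Within layer `k` the rotation switches from `rot k` to `rot (k + 1)`
across the interface `x₂ / h + x₁ = k + 1`, the segment joining the lower right to the upper left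
corner of the layer above `0 < x₁ < 1`. The amount of shear in that layer is `slip k / h - tilt k`
to the left and `slip k / h + tilt k` to the right of the interface: `tilt` makes the vertical
derivatives match as `h → 0`, and the displacements of size one come from `slip`. -/
structure ShearStack where
  /-- The number of layers in which the material is sheared. -/
  height : ℕ
  rot : ℤ → Mat2
  slip : ℤ → ℝ
  tilt : ℤ → ℝ
  rot_mem_SO2 : ∀ k, rot k ∈ SO2
  rot_of_nonpos : ∀ k ≤ 0, rot k = rot 0
  rot_of_height_le : ∀ k, (height : ℤ) ≤ k → rot k = rot height
  slip_of_notMem : ∀ k ∉ Ico 0 (height : ℤ), slip k = 0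
  tilt_of_notMem : ∀ k ∉ Ico 0 (height : ℤ), tilt k = 0
  tilt_matching : ∀ k, (rot k).mulVec e2 - tilt k • (rot k).mulVec e1 =
    (rot (k + 1)).mulVec e2 + tilt k • (rot (k + 1)).mulVec e1
  slip_of_ne : ∀ k, rot (k + 1) ≠ rot k → slip k = 1

namespace ShearStack

variable (S : ShearStack)

/-- The image of `e₁` under the `k`-th rotation. -/
def axis (k : ℤ) : V2 := (S.rot k).mulVec e1

/-- The displacement of `S.deformation h b` across layer `k`, read off at `x₁ = 0`. -/
def rise (h : ℝ) (k : ℤ) : V2 := h • (S.rot k).mulVec e2 + (S.slip k - h * S.tilt k) • S.axis k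

/-- The deformation of the stack with layer thickness `h` and value `b` at the origin, obtained by
integrating the displacement first along `x₁ = 0` and then horizontally. -/
def deformation (h : ℝ) (b x : V2) : V2 :=
  b + (stepPrimitive S.axis (x 1 / h + x 0) - stepPrimitive S.axis (x 1 / h)) +
    stepPrimitive (S.rise h) (x 1 / h)

/-- The rotation `R` in the gradient `R (I + γ e₁⊗e₂)` of `S.deformation h b`. -/
def rotation (h : ℝ) (x : V2) : Mat2 := S.rot ⌊x 1 / h + x 0⌋

/-- The amount of shear `γ` in the gradient `R (I + γ e₁⊗e₂)` of `S.deformation h b`. -/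
def shear (h : ℝ) (x : V2) : ℝ :=
  S.slip ⌊x 1 / h⌋ / h +
    (if ⌊x 1 / h + x 0⌋ = ⌊x 1 / h⌋ then -1 else 1) * S.tilt ⌊x 1 / h⌋

/-- A common bound for the slips and tilts of the stack. -/
def bound : ℝ := ∑ k ∈ Finset.range S.height, (|S.slip k| + |S.tilt k|)

/-- The horizontal jump accumulated across the stack as the layer thickness tends to zero. -/
def totalSlip : V2 := ∑ k ∈ Finset.range S.height, S.slip k • S.axis k

/-- The pointwise limit of `S.deformation h b` as the layer thickness tends to zero. -/
def limit (b x : V2) : V2 :=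
  if 0 ≤ x 1 then (S.rot S.height).mulVec x + b + S.totalSlip else (S.rot 0).mulVec x + b

lemma bound_nonneg : 0 ≤ S.bound := Finset.sum_nonneg fun _ _ => by positivity

lemma abs_slip_add_abs_tilt_le (k : ℤ) : |S.slip k| + |S.tilt k| ≤ S.bound := by
  by_cases hk : k ∈ Ico 0 (S.height : ℤ)
  · lift k to ℕ using hk.1
    exact Finset.single_le_sum (f := fun k : ℕ => |S.slip k| + |S.tilt k|)
      (fun _ _ => by positivity) (Finset.mem_range.2 (by exact_mod_cast hk.2))
  · simpa [S.slip_of_notMem k hk, S.tilt_of_notMem k hk] using S.bound_nonneg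

lemma abs_slip_le (k : ℤ) : |S.slip k| ≤ S.bound :=
  (le_add_of_nonneg_right (abs_nonneg _)).trans (S.abs_slip_add_abs_tilt_le k)

lemma abs_tilt_le (k : ℤ) : |S.tilt k| ≤ S.bound :=
  (le_add_of_nonneg_left (abs_nonneg _)).trans (S.abs_slip_add_abs_tilt_le k)

lemma norm_axis_le (k : ℤ) : ‖S.axis k‖ ≤ 1 := norm_mulVec_e1_le_one (S.rot_mem_SO2 k)

lemma norm_slip_sub_smul_axis_le {h H : ℝ} (h0 : 0 ≤ h) (hH : h ≤ H) (k : ℤ) :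
    ‖(S.slip k - h * S.tilt k) • S.axis k‖ ≤ S.bound * (1 + H) := by
  have := S.bound_nonneg
  calc ‖(S.slip k - h * S.tilt k) • S.axis k‖ ≤ |S.slip k - h * S.tilt k| * 1 := by
        rw [norm_smul, Real.norm_eq_abs]
        gcongr
        exact S.norm_axis_le k
    _ ≤ |S.slip k| + h * |S.tilt k| := by
        simpa [abs_mul, abs_of_nonneg h0] using abs_sub (S.slip k) (h * S.tilt k)
    _ ≤ S.bound + H * S.bound := by
        gcongr
        exacts [S.abs_slip_le k, h0.trans hH, S.abs_tilt_le k]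
    _ = S.bound * (1 + H) := by ring

lemma exists_lipschitzWith_deformation {h : ℝ} (hh : 0 ≤ h) (b : V2) :
    ∃ K, LipschitzWith K (S.deformation h b) := by
  have hrot : ∀ k, ‖h • (S.rot k).mulVec e2‖ ≤ h := fun k => by
    rw [norm_smul, Real.norm_of_nonneg hh]
    exact mul_le_of_le_one_right hh (norm_mulVec_e2_le_one (S.rot_mem_SO2 k))
  have hrise : ∀ k, ‖S.rise h k‖ ≤ h + S.bound * (1 + h) := fun k =>
    norm_add_le_of_le (hrot k) (S.norm_slip_sub_smul_axis_le hh le_rfl k)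
  obtain ⟨K, hK⟩ := exists_lipschitzWith_stepPrimitive S.norm_axis_le
  obtain ⟨L, hL⟩ := exists_lipschitzWith_stepPrimitive hrise
  have hlayer : LipschitzWith (‖h⁻¹‖₊ * 1) fun x : V2 => x 1 / h := by
    simp only [div_eq_inv_mul]
    exact (lipschitzWith_smul h⁻¹).comp (LipschitzWith.eval 1)
  exact ⟨_, ((LipschitzWith.const b).add ((hK.comp (hlayer.add (LipschitzWith.eval 0))).sub
    (hK.comp hlayer))).add (hL.comp hlayer)⟩

end ShearStack

section CountablePreimages

lemma ae_apply_notMem_of_countable {E : Type*} [NormedAddCommGroup E] [NormedSpace ℝ E]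
    [FiniteDimensional ℝ E] [MeasurableSpace E] [BorelSpace E] {μ : Measure E}
    [μ.IsAddHaarMeasure] {L : E →ₗ[ℝ] ℝ} (hL : L ≠ 0) {s : Set ℝ} (hs : s.Countable) :
    ∀ᵐ x ∂μ, L x ∉ s :=
  (ae_comp_linearMap_mem_iff L μ volume (LinearMap.surjective hL) hs.measurableSet.compl).2
    (hs.ae_notMem volume)

lemma ae_div_notMem_range_intCast {h : ℝ} (hh : h ≠ 0) : ∀ᵐ x : V2,
    x 1 / h ∉ range ((↑) : ℤ → ℝ) ∧ x 1 / h + x 0 ∉ range ((↑) : ℤ → ℝ) := by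
  have hlayer : h⁻¹ • LinearMap.proj 1 ≠ (0 : V2 →ₗ[ℝ] ℝ) := fun h0 => by
    simpa [hh, e2] using LinearMap.congr_fun h0 e2
  have hinterface : h⁻¹ • LinearMap.proj 1 + LinearMap.proj 0 ≠ (0 : V2 →ₗ[ℝ] ℝ) := fun h0 => by
    simpa [e1] using LinearMap.congr_fun h0 e1
  filter_upwards [ae_apply_notMem_of_countable hlayer (countable_range ((↑) : ℤ → ℝ)),
    ae_apply_notMem_of_countable hinterface (countable_range ((↑) : ℤ → ℝ))] with x hx hx'
  simpa [inv_mul_eq_div] using And.intro hx hx'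

lemma ae_apply_one_ne_zero : ∀ᵐ x : V2, x 1 ≠ 0 := by
  have hproj : (LinearMap.proj 1 : V2 →ₗ[ℝ] ℝ) ≠ 0 := fun h => by
    simpa [e2] using LinearMap.congr_fun h e2
  exact ae_apply_notMem_of_countable hproj (countable_singleton 0)

end CountablePreimages

namespace ShearStack

variable (S : ShearStack)

lemma inv_smul_axis_sub_add_rise {h : ℝ} (hh : h ≠ 0) {k l : ℤ} (hl : l = k ∨ l = k + 1) :
    h⁻¹ • (S.axis l - S.axis k + S.rise h k) = (S.rot l).mulVec e2 +
      (S.slip k / h + (if l = k then -1 else 1) * S.tilt k) • S.axis l := by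
  rcases hl with rfl | rfl
  · rw [if_pos rfl, rise, sub_self, zero_add, inv_smul_eq_iff₀ hh]
    match_scalars <;> field_simp
    ring
  · have hslip : S.axis (k + 1) - S.axis k + S.slip k • S.axis k = S.slip k • S.axis (k + 1) := by
      by_cases hk : S.rot (k + 1) = S.rot k
      · simp [axis, hk]
      · simp [S.slip_of_ne k hk]
    have hmatch : (S.rot k).mulVec e2 - S.tilt k • S.axis k =
        (S.rot (k + 1)).mulVec e2 + S.tilt k • S.axis (k + 1) := S.tilt_matching k
    rw [if_neg (by omega), inv_smul_eq_iff₀ hh]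
    calc S.axis (k + 1) - S.axis k + S.rise h k
        = (S.axis (k + 1) - S.axis k + S.slip k • S.axis k) +
            h • ((S.rot k).mulVec e2 - S.tilt k • S.axis k) := by rw [rise]; module
      _ = S.slip k • S.axis (k + 1) +
            h • ((S.rot (k + 1)).mulVec e2 + S.tilt k • S.axis (k + 1)) := by
        rw [hslip, hmatch]
      _ = _ := by match_scalars <;> field_simp

lemma hasLineDerivAt_deformation {h : ℝ} (b : V2) {x : V2} (v : V2)
    (hleft : x 1 / h ∉ range ((↑) : ℤ → ℝ)) (hx : x 1 / h + x 0 ∉ range ((↑) : ℤ → ℝ)) :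
    HasLineDerivAt ℝ (S.deformation h b) ((v 1 / h + v 0) • S.axis ⌊x 1 / h + x 0⌋ +
      (v 1 / h) • (S.rise h ⌊x 1 / h⌋ - S.axis ⌊x 1 / h⌋)) x v := by
  have hlayer : HasDerivAt (fun s : ℝ => (x + s • v) 1 / h) (v 1 / h) 0 := by
    simpa using (((hasDerivAt_id (0 : ℝ)).mul_const (v 1)).const_add (x 1)).div_const h
  have hhoriz : HasDerivAt (fun s : ℝ => (x + s • v) 0) (v 0) 0 := by
    simpa using ((hasDerivAt_id (0 : ℝ)).mul_const (v 0)).const_add (x 0)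
  have along {c : ℤ → V2} {τ : ℝ → ℝ} {τ' t : ℝ} (hτ : HasDerivAt τ τ' 0) (hτ0 : τ 0 = t)
      (ht : t ∉ range ((↑) : ℤ → ℝ)) :
      HasDerivAt (fun s => stepPrimitive c (τ s)) (τ' • c ⌊t⌋) 0 := by
    subst hτ0
    exact (hasDerivAt_stepPrimitive c ht).scomp 0 hτ
  have haxis := along (c := S.axis) (hlayer.add hhoriz) (by simp) hx
  have haxis0 := along (c := S.axis) hlayer (by simp) hleft
  have hrise := along (c := S.rise h) hlayer (by simp) hleft
  exact (((haxis.sub haxis0).const_add b).add hrise).congr_deriv (by module)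

end ShearStack

section Rectangle

lemma isOpen_Rect : IsOpen Rect :=
  (isOpen_Ioo.preimage (continuous_apply 0)).inter (isOpen_Ioo.preimage (continuous_apply 1))

lemma Rect_subset_Icc : Rect ⊆ Icc ![0, -1] ![1, 1] := fun x hx => by
  simp [Pi.le_def, Fin.forall_fin_two, hx.1.1.le, hx.1.2.le, hx.2.1.le, hx.2.2.le]

lemma volume_Rect_lt_top : volume Rect < ⊤ :=
  (measure_mono Rect_subset_Icc).trans_lt isCompact_Icc.measure_lt_top

lemma volume_Rect_ne_zero : volume Rect ≠ 0 :=
  (isOpen_Rect.measure_pos volume ⟨![1 / 2, 0], by norm_num [Rect]⟩).ne'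

lemma integrableOn_Rect_of_continuous {E : Type*} [NormedAddCommGroup E] {f : V2 → E}
    (hf : Continuous f) : IntegrableOn f Rect :=
  hf.continuousOn.integrableOn_Icc.mono_set Rect_subset_Icc

end Rectangle

namespace ShearStack

variable (S : ShearStack)

lemma hasLineDerivAt_deformation_single {h : ℝ} (hh : h ≠ 0) (b : V2) {x : V2}
    (hx0 : x 0 ∈ Ioo 0 1) (hleft : x 1 / h ∉ range ((↑) : ℤ → ℝ))
    (hx : x 1 / h + x 0 ∉ range ((↑) : ℤ → ℝ)) (j : Fin 2) :
    HasLineDerivAt ℝ (S.deformation h b)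
      ((S.rotation h x * (1 + S.shear h x • outer e1 e2)).col j) x (Pi.single j 1) := by
  have hfloor : ⌊x 1 / h + x 0⌋ = ⌊x 1 / h⌋ ∨ ⌊x 1 / h + x 0⌋ = ⌊x 1 / h⌋ + 1 := by
    have hlower : ⌊x 1 / h⌋ ≤ ⌊x 1 / h + x 0⌋ := Int.floor_mono (by linarith [hx0.1])
    have hupper : ⌊x 1 / h + x 0⌋ ≤ ⌊x 1 / h + 1⌋ := Int.floor_mono (by linarith [hx0.2])
    rw [Int.floor_add_one] at hupper
    omega
  convert S.hasLineDerivAt_deformation b (Pi.single j 1) hleft hx using 1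
  fin_cases j
  · exact (mul_one_add_smul_outer_col_zero _ _).trans (by simp [rotation, axis])
  · calc _ = (S.rotation h x).mulVec e2 + S.shear h x • (S.rotation h x).mulVec e1 :=
        mul_one_add_smul_outer_col_one _ _
      _ = h⁻¹ • (S.axis ⌊x 1 / h + x 0⌋ - S.axis ⌊x 1 / h⌋ + S.rise h ⌊x 1 / h⌋) :=
        (S.inv_smul_axis_sub_add_rise hh hfloor).symm
      _ = _ := by
        simp only [Fin.mk_one, Pi.single_eq_same, ne_eq, zero_ne_one, not_false_eq_true,
          Pi.single_eq_of_ne]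
        module

lemma measurable_rotation_apply (h : ℝ) (i j : Fin 2) :
    Measurable fun x => S.rotation h x i j := by
  have : Measurable fun k => S.rot k i j := .of_discrete
  exact this.comp (Int.measurable_floor.comp (by fun_prop))

lemma measurable_shear (h : ℝ) : Measurable (S.shear h) := by
  have : Measurable fun p : ℤ × ℤ =>
      S.slip p.2 / h + (if p.1 = p.2 then -1 else 1) * S.tilt p.2 := .of_discrete
  exact this.comp (.prodMk (Int.measurable_floor.comp (by fun_prop))
    (Int.measurable_floor.comp (by fun_prop)))

variable {S} {h : ℝ}

lemma shear_eq_zero (hh : 0 < h) {x : V2} (hx : x 1 ∉ Ico 0 (S.height * h)) :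
    S.shear h x = 0 := by
  have hfloor : ⌊x 1 / h⌋ ∉ Ico 0 (S.height : ℤ) := fun hk => hx
    ⟨by simpa using (le_div_iff₀ hh).1 (Int.floor_nonneg.1 hk.1),
      by simpa [Int.floor_lt, div_lt_iff₀ hh] using hk.2⟩
  simp [shear, S.slip_of_notMem _ hfloor, S.tilt_of_notMem _ hfloor]

lemma abs_shear_le (hh : 0 < h) (x : V2) : |S.shear h x| ≤ S.bound / h + S.bound := by
  have hsign : |(if ⌊x 1 / h + x 0⌋ = ⌊x 1 / h⌋ then -1 else 1 : ℝ)| = 1 := by split_ifs <;> simp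
  calc |S.shear h x| ≤ |S.slip ⌊x 1 / h⌋| / h + |S.tilt ⌊x 1 / h⌋| := by
        refine (abs_add_le _ _).trans_eq ?_
        rw [abs_div, abs_of_pos hh, abs_mul, hsign, one_mul]
    _ ≤ S.bound / h + S.bound := by
        gcongr
        exacts [S.abs_slip_le _, S.abs_tilt_le _]

variable (S)

lemma integrableOn_shear (hh : 0 < h) : IntegrableOn (S.shear h) Rect :=
  Measure.integrableOn_of_bounded volume_Rect_lt_top.ne
    (S.measurable_shear h).aestronglyMeasurable (ae_of_all _ (abs_shear_le hh))

lemma setIntegral_abs_shear_le (hh : 0 < h) {H : ℝ} (hH : h ≤ H) :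
    ∫ x in Rect, |S.shear h x| ≤ S.height * (S.bound * (1 + H)) := by
  set strip : Set V2 := Icc 0 ![1, S.height * h]
  have hstrip : volume.real strip = S.height * h := by
    rw [Measure.real, Real.volume_Icc_pi_toReal] <;>
      simp [Pi.le_def, Fin.forall_fin_two, hh.le, mul_nonneg]
  have hout : ∀ x ∈ Rect \ (Rect ∩ strip), |S.shear h x| = 0 := fun x hx => by
    rw [abs_eq_zero]
    refine shear_eq_zero hh fun hx1 => hx.2 ⟨hx.1, ?_⟩
    simp [strip, Pi.le_def, Fin.forall_fin_two, hx.1.1.1.le, hx.1.1.2.le, hx1.1, hx1.2.le]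
  calc ∫ x in Rect, |S.shear h x| = ∫ x in Rect ∩ strip, |S.shear h x| :=
        setIntegral_eq_of_subset_of_forall_sdiff_eq_zero isOpen_Rect.measurableSet
          inter_subset_left hout
    _ ≤ (S.bound / h + S.bound) * volume.real (Rect ∩ strip) :=
        (Real.le_norm_self _).trans (norm_setIntegral_le_of_norm_le_const
          ((measure_mono inter_subset_left).trans_lt volume_Rect_lt_top)
          fun x _ => by simpa using abs_shear_le hh x)
    _ ≤ (S.bound / h + S.bound) * volume.real strip := by
        have := S.bound_nonneg
        gcongr
        · exact isCompact_Icc.measure_ne_top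
        · exact inter_subset_right
    _ = S.height * (S.bound * (1 + h)) := by rw [hstrip]; field_simp
    _ ≤ S.height * (S.bound * (1 + H)) := by
        have := S.bound_nonneg
        gcongr

lemma isSobolev11On_deformation (hh : 0 < h) (b : V2) :
    IsSobolev11On Rect (S.deformation h b)
      fun x => S.rotation h x * (1 + S.shear h x • outer e1 e2) := by
  obtain ⟨K, hK⟩ := S.exists_lipschitzWith_deformation hh.le b
  refine isSobolev11On_of_lipschitzWith hK (integrableOn_Rect_of_continuous hK.continuous)
    (fun i j => ?_) ?_
  · refine Integrable.mono' (g := fun x => 1 + |S.shear h x|)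
      ((integrableOn_const volume_Rect_lt_top.ne).add (S.integrableOn_shear hh).abs) ?_
      (ae_of_all _ fun x => abs_mul_one_add_smul_outer_apply_le (S.rot_mem_SO2 _) _ i j)
    simp only [mul_one_add_smul_outer_apply]
    exact ((S.measurable_rotation_apply h i j).add ((S.measurable_shear h).mul
      ((S.measurable_rotation_apply h i 0).mul_const _))).aestronglyMeasurable
  · filter_upwards [ae_div_notMem_range_intCast hh.ne'] with x hx hxR j
    exact S.hasLineDerivAt_deformation_single hh.ne' b hxR.1 hx.1 hx.2 j

lemma memAeps_deformation {lam ε : ℝ} (hlam : lam ≤ 1) (hε : 0 < ε) (hh : 0 < h)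
    (hfit : S.height * h ≤ lam * ε) (b : V2) :
    MemAeps Rect lam ε (S.deformation h b) (S.rotation h) (S.shear h) := by
  refine ⟨ae_of_all _ fun x => S.rot_mem_SO2 _, S.integrableOn_shear hh,
    S.isSobolev11On_deformation hh b, ?_⟩
  have hrigid : MeasurableSet (rigid2 lam ε) :=
    measurableSet_le measurable_const (measurable_fract.comp (by fun_prop))
  filter_upwards [ae_restrict_mem (isOpen_Rect.measurableSet.inter hrigid)] with x hx
  have hfract : lam ≤ Int.fract (x 1 / ε) := hx.2
  refine shear_eq_zero hh fun hx1 => hfract.not_gt ?_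
  have hlt : x 1 / ε < lam := (div_lt_iff₀ hε).2 (hx1.2.trans_le hfit)
  rwa [Int.fract_eq_self.2 ⟨div_nonneg hx1.1 hε.le, hlt.trans_le hlam⟩]

end ShearStack

namespace ShearStack

variable (S : ShearStack)

lemma deformation_add (h : ℝ) (b c x : V2) :
    S.deformation h (b + c) x = S.deformation h b x + c := by
  simp only [deformation]
  abel

lemma norm_deformation_le {h H : ℝ} (hh : 0 < h) (hH : h ≤ H) (b : V2) {x : V2} (hx : x ∈ Rect) :
    ‖S.deformation h b x‖ ≤ ‖b‖ + 1 + (1 + S.bound * (1 + H) * S.height) := by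
  have hhoriz : ‖stepPrimitive S.axis (x 1 / h + x 0) - stepPrimitive S.axis (x 1 / h)‖ ≤ 1 :=
    (norm_stepPrimitive_sub_le S.norm_axis_le _ _).trans
      (by simpa [abs_of_pos hx.1.1] using hx.1.2.le)
  have hrot : ‖stepPrimitive (fun k => h • (S.rot k).mulVec e2) (x 1 / h)‖ ≤ 1 := by
    refine (norm_stepPrimitive_le (C := h) (fun k => ?_) _).trans ?_
    · rw [norm_smul, Real.norm_of_nonneg hh.le]
      exact mul_le_of_le_one_right hh.le (norm_mulVec_e2_le_one (S.rot_mem_SO2 k))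
    · rw [abs_div, abs_of_pos hh, mul_div_cancel₀ _ hh.ne']
      exact (abs_lt.2 hx.2).le
  have hslip : ‖stepPrimitive (fun k => (S.slip k - h * S.tilt k) • S.axis k) (x 1 / h)‖ ≤
      S.bound * (1 + H) * S.height :=
    norm_stepPrimitive_le_of_support (S.norm_slip_sub_smul_axis_le hh.le hH)
      (fun k hk => by simp [S.slip_of_notMem k hk, S.tilt_of_notMem k hk]) _
  have hrise : ‖stepPrimitive (S.rise h) (x 1 / h)‖ ≤ 1 + S.bound * (1 + H) * S.height := by
    change ‖stepPrimitive ((fun k => h • (S.rot k).mulVec e2) +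
      fun k => (S.slip k - h * S.tilt k) • S.axis k) (x 1 / h)‖ ≤ _
    rw [stepPrimitive_add]
    exact norm_add_le_of_le hrot hslip
  exact norm_add_le_of_le (norm_add_le_of_le le_rfl hhoriz) hrise

lemma deformation_eq_of_nonpos {h : ℝ} (hh : 0 < h) (b : V2) {x : V2} (hx0 : 0 ≤ x 0)
    (hx : x 1 / h + x 0 ≤ 0) : S.deformation h b x = (S.rot 0).mulVec x + b := by
  have hfloor {r : ℝ} (hr : r < 0) : ⌊r⌋ ∉ Ico 0 (S.height : ℤ) ∧ S.rot ⌊r⌋ = S.rot 0 :=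
    have hr' : ⌊r⌋ < 0 := Int.floor_lt.2 (by simpa using hr)
    ⟨fun hmem => hr'.not_ge hmem.1, S.rot_of_nonpos _ hr'.le⟩
  have hhoriz := stepPrimitive_sub_eq_smul S.axis (d := S.axis 0)
    (le_add_of_nonneg_right hx0) fun r hr => by rw [axis, (hfloor (hr.2.trans_le hx)).2, axis]
  have hvert := stepPrimitive_sub_eq_smul (S.rise h) (d := h • (S.rot 0).mulVec e2)
    ((le_add_of_nonneg_right hx0).trans hx) fun r hr => by
      simp [rise, (hfloor hr.2).2, S.slip_of_notMem _ (hfloor hr.2).1,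
        S.tilt_of_notMem _ (hfloor hr.2).1]
  have hvert' : stepPrimitive (S.rise h) (x 1 / h) = x 1 • (S.rot 0).mulVec e2 := by
    rw [← sub_sub_cancel (stepPrimitive (S.rise h) 0) (stepPrimitive _ (x 1 / h)), hvert,
      stepPrimitive, intervalIntegral.integral_same]
    match_scalars
    field_simp
    ring
  rw [deformation, hhoriz, hvert', mulVec_eq_smul_add_smul _ x, axis]
  module

lemma deformation_eq_of_height_le {h : ℝ} (hh : 0 < h) (b : V2) {x : V2} (hx0 : 0 ≤ x 0)
    (hx : S.height ≤ x 1 / h) : S.deformation h b x = (S.rot S.height).mulVec x + b +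
      (∑ k ∈ Finset.range S.height, S.rise h k - (h * S.height) • (S.rot S.height).mulVec e2) := by
  have hfloor {r : ℝ} (hr : S.height < r) :
      ⌊r⌋ ∉ Ico 0 (S.height : ℤ) ∧ S.rot ⌊r⌋ = S.rot S.height :=
    have hr' : (S.height : ℤ) ≤ ⌊r⌋ := Int.le_floor.2 (by exact_mod_cast hr.le)
    ⟨fun hmem => hr'.not_gt hmem.2, S.rot_of_height_le _ hr'⟩
  have hhoriz := stepPrimitive_sub_eq_smul S.axis (d := S.axis S.height)
    (le_add_of_nonneg_right hx0) fun r hr => by rw [axis, (hfloor (hx.trans_lt hr.1)).2, axis]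
  have hvert := stepPrimitive_sub_eq_smul (S.rise h) (d := h • (S.rot S.height).mulVec e2)
    hx fun r hr => by
      simp [rise, (hfloor hr.1).2, S.slip_of_notMem _ (hfloor hr.1).1,
        S.tilt_of_notMem _ (hfloor hr.1).1]
  rw [deformation, hhoriz, eq_add_of_sub_eq hvert, stepPrimitive_natCast,
    mulVec_eq_smul_add_smul _ x, axis]
  match_scalars <;> field_simp <;> ring

lemma tendsto_sum_rise :
    Tendsto (fun h => ∑ k ∈ Finset.range S.height, S.rise h k) (𝓝 0) (𝓝 S.totalSlip) := by
  have hcont : Continuous fun h => ∑ k ∈ Finset.range S.height, S.rise h k := by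
    unfold rise
    fun_prop
  simpa [rise, totalSlip] using hcont.tendsto 0

lemma tendsto_deformation_of_neg (b : V2) {x : V2} (hx0 : 0 ≤ x 0) (hx1 : x 1 < 0) :
    Tendsto (fun h => S.deformation h b x) (𝓝[>] 0) (𝓝 ((S.rot 0).mulVec x + b)) := by
  have hlayer : Tendsto (fun h => x 1 / h) (𝓝[>] 0) atBot := by
    simpa [div_eq_mul_inv] using tendsto_inv_nhdsGT_zero.const_mul_atTop_of_neg hx1
  refine tendsto_const_nhds.congr' ?_
  filter_upwards [self_mem_nhdsWithin, hlayer.eventually_le_atBot (-x 0)] with h hh hxh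
  exact (S.deformation_eq_of_nonpos hh b hx0 (by linarith)).symm

lemma tendsto_deformation_of_pos (b : V2) {x : V2} (hx0 : 0 ≤ x 0) (hx1 : 0 < x 1) :
    Tendsto (fun h => S.deformation h b x) (𝓝[>] 0)
      (𝓝 ((S.rot S.height).mulVec x + b + S.totalSlip)) := by
  have hlayer : Tendsto (fun h => x 1 / h) (𝓝[>] 0) atTop := by
    simpa [div_eq_mul_inv] using tendsto_inv_nhdsGT_zero.const_mul_atTop hx1
  have hremainder : Tendsto (fun h : ℝ => (h * S.height) • (S.rot S.height).mulVec e2) (𝓝 0)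
      (𝓝 0) := by
    simpa using (by fun_prop : Continuous fun h : ℝ =>
      (h * S.height) • (S.rot S.height).mulVec e2).tendsto 0
  have hlimit := ((S.tendsto_sum_rise.sub hremainder).mono_left
    (nhdsWithin_le_nhds (s := Ioi 0))).const_add ((S.rot S.height).mulVec x + b)
  rw [sub_zero] at hlimit
  refine hlimit.congr' ?_
  filter_upwards [self_mem_nhdsWithin, hlayer.eventually_ge_atTop (S.height : ℝ)] with h hh hxh
  exact (S.deformation_eq_of_height_le hh b hx0 hxh).symm

lemma tendsto_deformation (b : V2) {x : V2} (hx0 : 0 ≤ x 0) (hx1 : x 1 ≠ 0) :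
    Tendsto (fun h => S.deformation h b x) (𝓝[>] 0) (𝓝 (S.limit b x)) := by
  rcases hx1.lt_or_gt with hx1 | hx1
  · rw [limit, if_neg hx1.not_ge]
    exact S.tendsto_deformation_of_neg b hx0 hx1
  · rw [limit, if_pos hx1.le]
    exact S.tendsto_deformation_of_pos b hx0 hx1

end ShearStack

namespace ShearStack

/-- A stack of four layers joining `A` to `B` through an intermediate rotation `M`: layers `0` and
`2` carry the changes of rotation, layers `1` and `3` slip by `α` along `M e₁` and by `β` along
`B e₁`. -/
def ofRotations {A M B : Mat2} (hA : A ∈ SO2) (hM : M ∈ SO2) (hB : B ∈ SO2) (α β : ℝ) {τ τ' : ℝ}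
    (hτ : A.mulVec e2 - τ • A.mulVec e1 = M.mulVec e2 + τ • M.mulVec e1)
    (hτ' : M.mulVec e2 - τ' • M.mulVec e1 = B.mulVec e2 + τ' • B.mulVec e1) : ShearStack where
  height := 4
  rot k := if k ≤ 0 then A else if k ≤ 2 then M else B
  slip k := if k = 0 ∨ k = 2 then 1 else if k = 1 then α else if k = 3 then β else 0
  tilt k := if k = 0 then τ else if k = 2 then τ' else 0
  rot_mem_SO2 k := by split_ifs <;> assumption
  rot_of_nonpos k hk := by simp [hk]
  rot_of_height_le k hk := by grind
  slip_of_notMem k hk := by grind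
  tilt_of_notMem k hk := by grind
  tilt_matching k := by
    rcases eq_or_ne k 0 with rfl | h0
    · simpa using hτ
    rcases eq_or_ne k 2 with rfl | h2
    · simpa using hτ'
    have hrot : (k + 1 ≤ 0 ↔ k ≤ 0) ∧ (k + 1 ≤ 2 ↔ k ≤ 2) := by omega
    simp [h0, h2, hrot]
  slip_of_ne k hk := by grind

lemma totalSlip_ofRotations {A M B : Mat2} (hA : A ∈ SO2) (hM : M ∈ SO2) (hB : B ∈ SO2) (α β : ℝ)
    {τ τ' : ℝ} (hτ : A.mulVec e2 - τ • A.mulVec e1 = M.mulVec e2 + τ • M.mulVec e1)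
    (hτ' : M.mulVec e2 - τ' • M.mulVec e1 = B.mulVec e2 + τ' • B.mulVec e1) :
    (ofRotations hA hM hB α β hτ hτ').totalSlip =
      A.mulVec e1 + (α + 1) • M.mulVec e1 + β • B.mulVec e1 := by
  have hsum : (ofRotations hA hM hB α β hτ hτ').totalSlip =
      A.mulVec e1 + α • M.mulVec e1 + M.mulVec e1 + β • B.mulVec e1 := by
    simp [totalSlip, ofRotations, axis, Finset.sum_range_succ, -Matrix.mulVec_fin_two]
  rw [hsum]
  module

end ShearStack

/-- The intermediate rotation is chosen so that the slips along its axis and along that of `B` can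
produce any prescribed jump. -/
lemma exists_shearStack {A B : Mat2} (hA : A ∈ SO2) (hB : B ∈ SO2) (w : V2) :
    ∃ S : ShearStack, 0 < S.height ∧ S.rot 0 = A ∧ S.rot S.height = B ∧ S.totalSlip = w := by
  obtain ⟨M, hM, hMA, horth⟩ := exists_rotation_dot_eq_zero A hB
  have hBM : B ≠ -M := by
    rintro rfl
    have hneg : dot (M.mulVec e1) ((-M).mulVec e1) = -dot (M.mulVec e1) (M.mulVec e1) := by
      simp [dot, Matrix.neg_mulVec]
    rw [hneg, dot_mulVec_e1_self hM] at horth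
    norm_num at horth
  obtain ⟨τ, hτ⟩ := exists_tilt_matching hA hM hMA
  obtain ⟨τ', hτ'⟩ := exists_tilt_matching hM hB hBM
  refine ⟨.ofRotations hA hM hB (dot (w - A.mulVec e1) (M.mulVec e1) - 1)
    (dot (w - A.mulVec e1) (B.mulVec e1)) hτ hτ', by simp [ShearStack.ofRotations],
    by simp [ShearStack.ofRotations], by simp [ShearStack.ofRotations], ?_⟩
  rw [ShearStack.totalSlip_ofRotations, sub_add_cancel, add_assoc,
    ← eq_dot_smul_add_dot_smul (dot_mulVec_e1_self hM) (dot_mulVec_e1_self hB) horth,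
    add_sub_cancel]

section UniformApproximation

lemma exists_contDiff_tendstoUniformly {E F : Type*} [NormedAddCommGroup E] [NormedSpace ℝ E]
    [FiniteDimensional ℝ E] [NormedAddCommGroup F] [NormedSpace ℝ F] [CompleteSpace F] {U : Set E}
    (hU : IsOpen U) {φ : E → F} (hφ : Continuous φ) (hc : HasCompactSupport φ)
    (hs : tsupport φ ⊆ U) :
    ∃ ψ : ℕ → E → F, (∀ m, ContDiff ℝ (⊤ : ℕ∞) (ψ m) ∧ HasCompactSupport (ψ m) ∧
      tsupport (ψ m) ⊆ U) ∧ TendstoUniformly ψ φ atTop := by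
  have happrox (δ : ℝ) (hδ : 0 < δ) : ∃ ψ : E → F, (ContDiff ℝ (⊤ : ℕ∞) ψ ∧
      HasCompactSupport ψ ∧ tsupport ψ ⊆ U) ∧ ∀ a, dist (ψ a) (φ a) ≤ δ := by
    obtain ⟨r, hr, hφr⟩ :=
      Metric.uniformContinuous_iff.1 (hc.uniformContinuous_of_continuous hφ) δ hδ
    obtain ⟨s, hs0, hsU⟩ := hc.isCompact.exists_cthickening_subset_open hU hs
    obtain ⟨ψ, hψ, hclose⟩ :=
      hφ.exists_contDiff_dist_le_of_forall_mem_ball_dist_le (lt_min hr hs0)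
    have hsupport : Function.support ψ ⊆ Metric.cthickening s (tsupport φ) := fun a ha => by
      contrapose! ha
      have hball : ∀ x ∈ Metric.ball a s, φ x = 0 := fun x hx => by
        by_contra hx0
        exact ha (Metric.mem_cthickening_of_dist_le a x s _ (subset_tsupport φ hx0)
          (Metric.mem_ball'.1 hx).le)
      have ha0 : φ a = 0 := hball a (Metric.mem_ball_self hs0)
      have hdist : dist (ψ a) (φ a) ≤ 0 := hclose a 0 fun x hx => by
        rw [hball x (Metric.ball_subset_ball (min_le_right _ _) hx), ha0, dist_self]
      simpa [ha0] using hdist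
    refine ⟨ψ, ⟨hψ, .of_support_subset_isCompact hc.isCompact.cthickening hsupport,
      (closure_minimal hsupport Metric.isClosed_cthickening).trans hsU⟩, fun a => ?_⟩
    exact hclose a δ fun x hx => (hφr (lt_of_lt_of_le hx (min_le_left _ _))).le
  choose ψ hψ hdist using fun m : ℕ => happrox (1 / (m + 1)) Nat.one_div_pos_of_nat
  refine ⟨ψ, hψ, Metric.tendstoUniformly_iff.2 fun δ hδ => ?_⟩
  filter_upwards [tendsto_one_div_add_atTop_nhds_zero_nat.eventually_lt_const hδ] with m hm a
  rw [dist_comm]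
  exact (hdist m a).trans_lt hm

variable {X ι κ : Type*} [TopologicalSpace X] [MeasurableSpace X] [OpensMeasurableSpace X]
  {μ : Measure X} {φ : X → ℝ}

lemma integrable_testFunction_mul {f : X → ℝ} (hφ : Continuous φ) (hc : HasCompactSupport φ)
    (hf : Integrable f μ) : Integrable (fun x => φ x * f x) μ := by
  obtain ⟨C, hC⟩ := hc.exists_bound_of_continuous hφ
  exact hf.bdd_mul hφ.aestronglyMeasurable (ae_of_all _ hC)

lemma tendstoUniformly_integral_mul {l : Filter κ} {f : ι → X → ℝ} {ψ : κ → X → ℝ} {M : ℝ}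
    (hψ : ∀ m, Continuous (ψ m)) (hψc : ∀ m, HasCompactSupport (ψ m)) (hφ : Continuous φ)
    (hφc : HasCompactSupport φ) (hf : ∀ n, Integrable (f n) μ) (hM : ∀ n, ∫ x, |f n x| ∂μ ≤ M)
    (hlim : TendstoUniformly ψ φ l) :
    TendstoUniformly (fun m n => ∫ x, ψ m x * f n x ∂μ) (fun n => ∫ x, φ x * f n x ∂μ) l := by
  rw [Metric.tendstoUniformly_iff] at hlim ⊢
  intro η hη
  have hδ : 0 < η / (|M| + 1) := by positivity
  filter_upwards [hlim _ hδ] with m hm n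
  have hdiff : ∀ x, |φ x * f n x - ψ m x * f n x| ≤ η / (|M| + 1) * |f n x| := fun x => by
    rw [← sub_mul, abs_mul]
    gcongr
    exact (hm x).le
  calc dist (∫ x, φ x * f n x ∂μ) (∫ x, ψ m x * f n x ∂μ)
      = |∫ x, (φ x * f n x - ψ m x * f n x) ∂μ| := by
        rw [integral_sub (integrable_testFunction_mul hφ hφc (hf n))
          (integrable_testFunction_mul (hψ m) (hψc m) (hf n)), Real.dist_eq]
    _ ≤ ∫ x, η / (|M| + 1) * |f n x| ∂μ :=
        (Real.norm_eq_abs _).symm.trans_le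
          (norm_integral_le_of_norm_le ((hf n).abs.const_mul _) (ae_of_all _ hdiff))
    _ ≤ η / (|M| + 1) * |M| := by
        rw [integral_const_mul]
        gcongr
        exact (hM n).trans (le_abs_self M)
    _ < η := by
        rw [div_mul_eq_mul_div, div_lt_iff₀ (by positivity)]
        linarith

end UniformApproximation

section WeakStarConvergence

variable {Ω : Set V2} {u : V2 → V2}

lemma continuous_vnorm : Continuous vnorm := by
  unfold vnorm
  fun_prop

lemma abs_apply_le_mnorm (M : Mat2) (i j : Fin 2) : |M i j| ≤ mnorm M :=
  Real.abs_le_sqrt <| (Finset.single_le_sum (f := fun j => M i j ^ 2)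
    (fun _ _ => sq_nonneg _) (Finset.mem_univ j)).trans
      (Finset.single_le_sum (f := fun i => ∑ j, M i j ^ 2)
        (fun _ _ => Finset.sum_nonneg fun _ _ => sq_nonneg _) (Finset.mem_univ i))

lemma vnorm_le_two_mul_norm (v : V2) : vnorm v ≤ 2 * ‖v‖ := by
  have hcoord (i : Fin 2) : v i ^ 2 ≤ ‖v‖ ^ 2 := sq_le_sq.2 (by simpa using norm_le_pi_norm v i)
  exact Real.sqrt_le_iff.2 ⟨by positivity, by nlinarith [hcoord 0, hcoord 1]⟩

lemma HasBVDerivOn.integrable_apply {gu gs : V2 → Mat2} {σ : Measure V2}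
    (h : HasBVDerivOn Ω u gu σ gs) (i j : Fin 2) : Integrable (fun x => gs x i j) σ := by
  have : IsFiniteMeasure σ := ⟨h.fin.lt_top⟩
  refine .of_bound (h.meas_gs i j).aestronglyMeasurable 1 ?_
  filter_upwards [h.unit] with x hx
  exact (abs_apply_le_mnorm _ i j).trans_eq hx

lemma IsSobolev11On.gradient_ae_eq (hΩ : IsOpen Ω) {g g' : V2 → Mat2}
    (hg : IsSobolev11On Ω u g) (hg' : IsSobolev11On Ω u g') (i j : Fin 2) :
    ∀ᵐ x ∂(volume.restrict Ω), g x i j = g' x i j := by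
  rw [ae_restrict_iff' hΩ.measurableSet]
  have hzero := hΩ.ae_eq_zero_of_integral_contDiff_smul_eq_zero (μ := volume)
    (f := fun x => g x i j - g' x i j) ((hg.int_gu i j).sub (hg'.int_gu i j)).locallyIntegrableOn
    fun φ hφ hc hs => by
      have hibp : ∫ x in Ω, φ x * g x i j = ∫ x in Ω, φ x * g' x i j :=
        neg_injective ((hg.ibp φ hφ hc hs i j).symm.trans (hg'.ibp φ hφ hc hs i j))
      simp only [smul_eq_mul]
      rw [← setIntegral_testFunction_mul hs fun x => g x i j - g' x i j]
      simp only [mul_sub]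
      rw [integral_sub (integrable_testFunction_mul hφ.continuous hc (hg.int_gu i j))
        (integrable_testFunction_mul hφ.continuous hc (hg'.int_gu i j)), hibp, sub_self]
  filter_upwards [hzero] with x hx hxΩ
  exact sub_eq_zero.1 (hx hxΩ)

variable {un : ℕ → V2 → V2} {C : ℝ}

lemma l1ConvOn_of_bounded (hvol : volume Ω ≠ ⊤)
    (hmeas : ∀ n, AEStronglyMeasurable (un n) (volume.restrict Ω))
    (hbound : ∀ n, ∀ᵐ x ∂(volume.restrict Ω), ‖un n x‖ ≤ C)
    (hlim : ∀ᵐ x ∂(volume.restrict Ω), Tendsto (fun n => un n x) atTop (𝓝 (u x))) :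
    L1ConvOn Ω un u := by
  have hmeas_u := aestronglyMeasurable_of_tendsto_ae _ hmeas hlim
  have hdom := tendsto_integral_of_dominated_convergence (F := fun n x => vnorm (un n x - u x))
    (f := fun _ => 0) (fun _ => 2 * (C + C))
    (fun n => continuous_vnorm.comp_aestronglyMeasurable ((hmeas n).sub hmeas_u))
    (integrableOn_const hvol) (fun n => ?_) ?_
  · simpa [L1ConvOn] using hdom
  · filter_upwards [hlim, ae_all_iff.2 hbound] with x hx hb
    rw [Real.norm_of_nonneg (show 0 ≤ vnorm _ from Real.sqrt_nonneg _)]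
    refine (vnorm_le_two_mul_norm _).trans ?_
    gcongr
    exact norm_sub_le_of_le (hb n) (le_of_tendsto' hx.norm hb)
  · filter_upwards [hlim] with x hx
    have hzero : vnorm (u x - u x) = 0 := by simp [vnorm]
    simpa only [hzero, Function.comp_def] using
      (continuous_vnorm.tendsto _).comp (hx.sub_const (u x))

variable {G : ℕ → V2 → Mat2} {gu gs : V2 → Mat2} {σ : Measure V2}

lemma tendsto_setIntegral_mul_gradient (hvol : volume Ω ≠ ⊤) (hBV : HasBVDerivOn Ω u gu σ gs)
    (hG : ∀ n, IsSobolev11On Ω (un n) (G n))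
    (hbound : ∀ n, ∀ᵐ x ∂(volume.restrict Ω), ‖un n x‖ ≤ C)
    (hlim : ∀ᵐ x ∂(volume.restrict Ω), Tendsto (fun n => un n x) atTop (𝓝 (u x))) {ψ : V2 → ℝ}
    (hψ : ContDiff ℝ (⊤ : ℕ∞) ψ) (hc : HasCompactSupport ψ) (hs : tsupport ψ ⊆ Ω)
    (i j : Fin 2) :
    Tendsto (fun n => ∫ x in Ω, ψ x * G n x i j) atTop
      (𝓝 ((∫ x in Ω, ψ x * gu x i j) + ∫ x, ψ x * gs x i j ∂σ)) := by
  have hpd : Continuous (pd j ψ) := continuous_pd (hψ.of_le (by norm_cast)) j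
  obtain ⟨D, hD⟩ := (hasCompactSupport_pd hc j).exists_bound_of_continuous hpd
  have hdom : Tendsto (fun n => ∫ x in Ω, un n x i * pd j ψ x) atTop
      (𝓝 (∫ x in Ω, u x i * pd j ψ x)) := by
    refine tendsto_integral_of_dominated_convergence (fun _ => C * D)
      (fun n => (((hG n).int_u.eval i).aestronglyMeasurable.mul hpd.aestronglyMeasurable))
      (integrableOn_const hvol) (fun n => ?_) ?_
    · filter_upwards [hbound n] with x hx
      rw [norm_mul]
      exact mul_le_mul ((norm_le_pi_norm _ i).trans hx) (hD x) (norm_nonneg _)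
        ((norm_nonneg _).trans hx)
    · filter_upwards [hlim] with x hx
      exact (tendsto_pi_nhds.1 hx i).mul_const _
  convert hdom.neg using 2
  · rw [(hG _).ibp ψ hψ hc hs i j, neg_neg]
  · rw [hBV.ibp ψ hψ hc hs i j]
    ring

variable {M : ℝ}

lemma measConv_of_bounded (hΩ : IsOpen Ω) (hvol : volume Ω ≠ ⊤) (hBV : HasBVDerivOn Ω u gu σ gs)
    (hG : ∀ n, IsSobolev11On Ω (un n) (G n)) (hM : ∀ n i j, ∫ x in Ω, |G n x i j| ≤ M)
    (hbound : ∀ n, ∀ᵐ x ∂(volume.restrict Ω), ‖un n x‖ ≤ C)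
    (hlim : ∀ᵐ x ∂(volume.restrict Ω), Tendsto (fun n => un n x) atTop (𝓝 (u x))) :
    MeasConv Ω G gu σ gs := by
  intro φ hφ hc hs i j
  obtain ⟨ψ, hψ, hψφ⟩ := exists_contDiff_tendstoUniformly hΩ hφ hc hs
  have hψ' (m) : Continuous (ψ m) := (hψ m).1.continuous
  have hψc (m) : HasCompactSupport (ψ m) := (hψ m).2.1
  have hlimit {μ : Measure V2} {f : V2 → ℝ} (hf : Integrable f μ) :
      Tendsto (fun m => ∫ x, ψ m x * f x ∂μ) atTop (𝓝 (∫ x, φ x * f x ∂μ)) :=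
    (tendstoUniformly_integral_mul (f := fun _ : Unit => f) hψ' hψc hφ hc (fun _ => hf)
      (fun _ => le_rfl) hψφ).tendsto_at ()
  exact (tendstoUniformly_integral_mul hψ' hψc hφ hc (fun n => (hG n).int_gu i j)
    (fun n => hM n i j) hψφ).tendsto_of_eventually_tendsto
      (Eventually.of_forall fun m => tendsto_setIntegral_mul_gradient hvol hBV hG hbound hlim
        (hψ m).1 (hψ m).2.1 (hψ m).2.2 i j)
      ((hlimit (hBV.int_gu i j)).add (hlimit (hBV.integrable_apply i j)))

lemma weakStarToBV_of_bounded (hΩ : IsOpen Ω) (hvol : volume Ω ≠ ⊤)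
    (hBV : HasBVDerivOn Ω u gu σ gs) (hG : ∀ n, IsSobolev11On Ω (un n) (G n))
    (hM : ∀ n i j, ∫ x in Ω, |G n x i j| ≤ M)
    (hbound : ∀ n, ∀ᵐ x ∂(volume.restrict Ω), ‖un n x‖ ≤ C)
    (hlim : ∀ᵐ x ∂(volume.restrict Ω), Tendsto (fun n => un n x) atTop (𝓝 (u x))) :
    WeakStarToBV Ω un u := by
  refine ⟨gu, σ, gs, hBV,
    l1ConvOn_of_bounded hvol (fun n => (hG n).int_u.aestronglyMeasurable) hbound hlim,
    fun g hg => measConv_of_bounded (M := M) hΩ hvol hBV hg (fun n i j => ?_) hbound hlim⟩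
  refine (integral_congr_ae ?_).trans_le (hM n i j)
  filter_upwards [(hg n).gradient_ae_eq hΩ (hG n) i j] with x hx
  rw [hx]

end WeakStarConvergence

section HalfPlane

/-- The closed upper half-plane, above the jump line. -/
def upperHalf : Set V2 := {x | 0 ≤ x 1}

instance : DecidablePred (· ∈ upperHalf) := fun x => inferInstanceAs (Decidable (0 ≤ x 1))

lemma measurableSet_upperHalf : MeasurableSet upperHalf :=
  measurableSet_le measurable_const (measurable_pi_apply 1)

lemma integral_eq_integral_integral {f : V2 → ℝ} (hf : Integrable f) :
    ∫ x, f x = ∫ s : ℝ, ∫ t : ℝ, f ![s, t] := by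
  have hvol := (volume_preserving_finTwoArrow ℝ).symm
  rw [← hvol.integral_comp' f]
  exact integral_prod _ ((hvol.integrable_comp_emb (MeasurableEquiv.measurableEmbedding _)).2 hf)

lemma integral_eq_integral_integral_swap {f : V2 → ℝ} (hf : Integrable f) :
    ∫ x, f x = ∫ t : ℝ, ∫ s : ℝ, f ![s, t] := by
  have hvol := (volume_preserving_finTwoArrow ℝ).symm
  rw [← hvol.integral_comp' f]
  exact integral_prod_symm _
    ((hvol.integrable_comp_emb (MeasurableEquiv.measurableEmbedding _)).2 hf)

variable {g w φ : V2 → ℝ}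

lemma hasDerivAt_comp_update (hg : ContDiff ℝ 1 g) (x : V2) (j : Fin 2) (t : ℝ) :
    HasDerivAt (fun t => g (Function.update x j t)) (pd j g (Function.update x j t)) t :=
  (hg.differentiable one_ne_zero _).hasFDerivAt.comp_hasDerivAt t (hasDerivAt_update x j t)

lemma contDiff_comp_update (hg : ContDiff ℝ 1 g) (x : V2) (j : Fin 2) :
    ContDiff ℝ 1 fun t => g (Function.update x j t) :=
  hg.comp (contDiff_update 1 x j)

lemma hasCompactSupport_comp_update (hc : HasCompactSupport g) (x : V2) (j : Fin 2) :
    HasCompactSupport fun t => g (Function.update x j t) :=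
  .of_support_subset_isCompact (hc.isCompact.image (continuous_apply j)) fun t ht =>
    ⟨Function.update x j t, subset_closure ht, Function.update_self ..⟩

lemma integrable_pd (hg : ContDiff ℝ 1 g) (hc : HasCompactSupport g) (j : Fin 2) :
    Integrable (pd j g) :=
  (continuous_pd hg j).integrable_of_hasCompactSupport (hasCompactSupport_pd hc j)

lemma integral_pd_comp_update (hg : ContDiff ℝ 1 g) (hc : HasCompactSupport g) (x : V2)
    (j : Fin 2) : ∫ t, pd j g (Function.update x j t) = 0 := by
  refine integral_eq_zero_of_hasDerivAt_of_integrable (hasDerivAt_comp_update hg x j) ?_ ?_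
  · exact ((continuous_pd hg j).comp (continuous_const.update j continuous_id)
      ).integrable_of_hasCompactSupport
      (hasCompactSupport_comp_update (hasCompactSupport_pd hc j) x j)
  · exact (contDiff_comp_update hg x j).continuous.integrable_of_hasCompactSupport
      (hasCompactSupport_comp_update hc x j)

lemma integral_Ici_pd_comp_update (hg : ContDiff ℝ 1 g) (hc : HasCompactSupport g) (x : V2)
    (j : Fin 2) (a : ℝ) :
    ∫ t in Ici a, pd j g (Function.update x j t) = -g (Function.update x j a) := by
  rw [integral_Ici_eq_integral_Ioi, ← HasCompactSupport.integral_Ioi_deriv_eq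
    (contDiff_comp_update hg x j) (hasCompactSupport_comp_update hc x j) a]
  simp only [(hasDerivAt_comp_update hg x j _).deriv]

lemma integral_pd (hg : ContDiff ℝ 1 g) (hc : HasCompactSupport g) (j : Fin 2) :
    ∫ x, pd j g x = 0 := by
  obtain ⟨D, hD⟩ := hg.lipschitzWith_of_hasCompactSupport hc one_ne_zero
  have hparts : ∫ x, lineDeriv ℝ (fun _ : V2 => (1 : ℝ)) x (-Pi.single j 1) * g x =
      ∫ x, lineDeriv ℝ g x (- -Pi.single j 1) * 1 :=
    (LipschitzWith.const 1).integral_lineDeriv_mul_eq hD hc _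
  have hconst : ∀ x v, lineDeriv ℝ (fun _ : V2 => (1 : ℝ)) x v = 0 := by simp [lineDeriv]
  simpa [hconst, (hg.differentiable one_ne_zero _).lineDeriv_eq_fderiv, pd] using hparts.symm

lemma update_vecCons_zero (s t r : ℝ) : Function.update ![s, t] 0 r = ![r, t] := by
  ext i; fin_cases i <;> rfl

lemma update_vecCons_one (s t r : ℝ) : Function.update ![s, t] 1 r = ![s, r] := by
  ext i; fin_cases i <;> rfl

lemma setIntegral_upperHalf_pd_zero (hg : ContDiff ℝ 1 g) (hc : HasCompactSupport g) :
    ∫ x in upperHalf, pd 0 g x = 0 := by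
  rw [← integral_indicator measurableSet_upperHalf, integral_eq_integral_integral_swap
    ((integrable_pd hg hc 0).indicator measurableSet_upperHalf)]
  refine integral_eq_zero_of_ae (.of_forall fun t => ?_)
  have hline : ∫ s, pd 0 g ![s, t] = 0 := by
    simpa only [update_vecCons_zero] using integral_pd_comp_update hg hc ![0, t] 0
  by_cases ht : 0 ≤ t <;> simp [indicator, upperHalf, ht, hline]

lemma setIntegral_upperHalf_pd_one (hg : ContDiff ℝ 1 g) (hc : HasCompactSupport g) :
    ∫ x in upperHalf, pd 1 g x = -∫ s, g ![s, 0] := by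
  rw [← integral_indicator measurableSet_upperHalf, integral_eq_integral_integral
    ((integrable_pd hg hc 1).indicator measurableSet_upperHalf), ← integral_neg]
  congr 1 with s
  have hline : ∫ t in Ici (0 : ℝ), pd 1 g ![s, t] = -g ![s, 0] := by
    simpa only [update_vecCons_one] using integral_Ici_pd_comp_update hg hc ![s, 0] 1 0
  rw [← hline, ← integral_indicator measurableSet_Ici]
  rfl

lemma setIntegral_upperHalf_pd (hg : ContDiff ℝ 1 g) (hc : HasCompactSupport g) (j : Fin 2) :
    ∫ x in upperHalf, pd j g x = -(e2 j * ∫ s, g ![s, 0]) := by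
  fin_cases j
  · simpa [e2] using setIntegral_upperHalf_pd_zero hg hc
  · simpa [e2] using setIntegral_upperHalf_pd_one hg hc

lemma setIntegral_upperHalf_compl_pd (hg : ContDiff ℝ 1 g) (hc : HasCompactSupport g)
    (j : Fin 2) : ∫ x in upperHalfᶜ, pd j g x = e2 j * ∫ s, g ![s, 0] := by
  have hsplit := integral_add_compl measurableSet_upperHalf (integrable_pd hg hc j)
  linarith [integral_pd hg hc j, setIntegral_upperHalf_pd hg hc j]

lemma pd_mul (hw : ContDiff ℝ 1 w) (hφ : ContDiff ℝ 1 φ) (j : Fin 2) (x : V2) :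
    pd j (fun x => w x * φ x) x = w x * pd j φ x + φ x * pd j w x := by
  simp [pd, fderiv_fun_mul (hw.differentiable one_ne_zero x) (hφ.differentiable one_ne_zero x)]

lemma setIntegral_mul_pd_add (hw : ContDiff ℝ 1 w) (hφ : ContDiff ℝ 1 φ)
    (hc : HasCompactSupport φ) (T : Set V2) (j : Fin 2) :
    (∫ x in T, w x * pd j φ x) + ∫ x in T, φ x * pd j w x =
      ∫ x in T, pd j (fun x => w x * φ x) x := by
  simp only [pd_mul hw hφ]
  refine (integral_add ?_ ?_).symm
  · exact ((hw.continuous.mul (continuous_pd hφ j)).integrable_of_hasCompactSupport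
      (hasCompactSupport_pd hc j).mul_left).integrableOn
  · exact ((hφ.continuous.mul (continuous_pd hw j)).integrable_of_hasCompactSupport
      hc.mul_right).integrableOn

lemma integral_ite_upperHalf {f g : V2 → ℝ} (hf : Integrable f) (hg : Integrable g) :
    ∫ x, (if 0 ≤ x 1 then f x else g x) = (∫ x in upperHalf, f x) + ∫ x in upperHalfᶜ, g x :=
  integral_piecewise (s := upperHalf) measurableSet_upperHalf hf.integrableOn hg.integrableOn

lemma integrable_comp_vecCons_zero (hg : Continuous g) (hc : HasCompactSupport g) :
    Integrable fun s : ℝ => g ![s, 0] := by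
  have hslice := hasCompactSupport_comp_update hc ![0, 0] 0
  simp only [update_vecCons_zero] at hslice
  exact (hg.comp (by fun_prop)).integrable_of_hasCompactSupport hslice

lemma integral_ite_mul_pd {wp wm : V2 → ℝ} (hwp : ContDiff ℝ 1 wp) (hwm : ContDiff ℝ 1 wm)
    (hφ : ContDiff ℝ 1 φ) (hc : HasCompactSupport φ) (j : Fin 2) :
    ∫ x, (if 0 ≤ x 1 then wp x else wm x) * pd j φ x =
      -(∫ x, φ x * if 0 ≤ x 1 then pd j wp x else pd j wm x) -
        e2 j * ∫ s, φ ![s, 0] * (wp ![s, 0] - wm ![s, 0]) := by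
  have hintegrable : ∀ {w}, ContDiff ℝ 1 w → Integrable fun x => w x * pd j φ x := fun hw =>
    (hw.continuous.mul (continuous_pd hφ j)).integrable_of_hasCompactSupport
      (hasCompactSupport_pd hc j).mul_left
  have hintegrable' : ∀ {w}, ContDiff ℝ 1 w → Integrable fun x => φ x * pd j w x := fun hw =>
    (hφ.continuous.mul (continuous_pd hw j)).integrable_of_hasCompactSupport hc.mul_right
  have htrace : ∀ {w}, ContDiff ℝ 1 w → Integrable fun s : ℝ => w ![s, 0] * φ ![s, 0] :=
    fun hw => integrable_comp_vecCons_zero (hw.continuous.mul hφ.continuous) hc.mul_left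
  have hjump : ∫ s, φ ![s, 0] * (wp ![s, 0] - wm ![s, 0]) =
      (∫ s, wp ![s, 0] * φ ![s, 0]) - ∫ s, wm ![s, 0] * φ ![s, 0] := by
    rw [← integral_sub (htrace hwp) (htrace hwm)]
    congr 1 with s
    ring
  have hup := setIntegral_mul_pd_add hwp hφ hc upperHalf j
  have hlow := setIntegral_mul_pd_add hwm hφ hc upperHalfᶜ j
  rw [setIntegral_upperHalf_pd (hwp.mul hφ) hc.mul_left] at hup
  rw [setIntegral_upperHalf_compl_pd (hwm.mul hφ) hc.mul_left] at hlow
  simp only [ite_mul, mul_ite]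
  rw [integral_ite_upperHalf (hintegrable hwp) (hintegrable hwm),
    integral_ite_upperHalf (hintegrable' hwp) (hintegrable' hwm), hjump]
  linarith

end HalfPlane

section JumpMeasure

variable {J : ℝ → V2}

/-- The total variation `|J| H¹` of a jump `J` carried by the segment `(0,1) × {0}`. -/
def jumpMeasure (J : ℝ → V2) : Measure V2 :=
  ((volume.restrict (Ioo (0 : ℝ) 1)).withDensity fun s => ENNReal.ofReal (vnorm (J s))).map
    fun s => ![s, 0]

/-- The polar density `(J / |J|) ⊗ e₂` of a jump `J` across the horizontal axis; it vanishes where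
`J` does. -/
def jumpDensity (J : ℝ → V2) (x : V2) : Mat2 := outer ((vnorm (J (x 0)))⁻¹ • J (x 0)) e2

lemma measurable_vecCons_zero : Measurable fun s : ℝ => (![s, 0] : V2) :=
  (show Continuous fun s : ℝ => (![s, 0] : V2) by fun_prop).measurable

lemma measurable_jumpDensity_apply (hJ : Continuous J) (i j : Fin 2) :
    Measurable fun x => jumpDensity J x i j := by
  have hJ0 : Continuous fun x : V2 => J (x 0) := hJ.comp (continuous_apply 0)
  have hnorm : Measurable fun x : V2 => vnorm (J (x 0)) := (continuous_vnorm.comp hJ0).measurable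
  exact (hnorm.inv.mul (measurable_pi_iff.1 hJ0.measurable i)).mul_const _

lemma vnorm_sq (v : V2) : vnorm v ^ 2 = v 0 ^ 2 + v 1 ^ 2 := Real.sq_sqrt (by positivity)

lemma vnorm_smul_inv_vnorm_smul (v : V2) : vnorm v • (vnorm v)⁻¹ • v = v := by
  by_cases hv : vnorm v = 0
  · have hsq := vnorm_sq v
    rw [hv] at hsq ⊢
    have h0 : v 0 = 0 := by nlinarith [sq_nonneg (v 0), sq_nonneg (v 1)]
    have h1 : v 1 = 0 := by nlinarith [sq_nonneg (v 0), sq_nonneg (v 1)]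
    ext i
    fin_cases i <;> simp [h0, h1]
  · exact smul_inv_smul₀ hv v

lemma mnorm_outer_e2 (v : V2) : mnorm (outer v e2) = vnorm v := by
  simp [mnorm, vnorm, outer, e2, Fin.sum_univ_two]

lemma vnorm_inv_vnorm_smul {v : V2} (hv : vnorm v ≠ 0) : vnorm ((vnorm v)⁻¹ • v) = 1 := by
  have hsq : vnorm ((vnorm v)⁻¹ • v) ^ 2 = 1 := by
    rw [vnorm_sq]
    simp only [Pi.smul_apply, smul_eq_mul, mul_pow, ← mul_add, ← vnorm_sq]
    field_simp
  exact (pow_eq_one_iff_of_nonneg (Real.sqrt_nonneg _) two_ne_zero).1 hsq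

lemma measurable_ofReal_vnorm (hJ : Continuous J) :
    Measurable fun s => ENNReal.ofReal (vnorm (J s)) :=
  (continuous_vnorm.comp hJ).measurable.ennreal_ofReal

lemma jumpMeasure_univ_ne_top (hJ : Continuous J) : jumpMeasure J univ ≠ ⊤ := by
  rw [jumpMeasure, Measure.map_apply measurable_vecCons_zero .univ, preimage_univ,
    withDensity_apply _ .univ, Measure.restrict_univ]
  have hintegrable : IntegrableOn (fun s => vnorm (J s)) (Ioo 0 1) :=
    (continuous_vnorm.comp hJ).integrableOn_Icc.mono_set Ioo_subset_Icc_self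
  exact hintegrable.lintegral_lt_top.ne

lemma jumpMeasure_eq_zero {T : Set V2} (hT : MeasurableSet T)
    (hdisj : ∀ s ∈ Ioo (0 : ℝ) 1, ![s, 0] ∉ T) : jumpMeasure J T = 0 := by
  rw [jumpMeasure, Measure.map_apply measurable_vecCons_zero hT]
  refine withDensity_absolutelyContinuous _ _ ?_
  rw [Measure.restrict_apply (measurable_vecCons_zero hT)]
  exact measure_mono_null (fun s hs => hdisj s hs.2 hs.1) measure_empty

lemma jumpMeasure_mutuallySingular : jumpMeasure J ⟂ₘ volume := by
  have hT : MeasurableSet {x : V2 | x 1 = 0} :=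
    measurableSet_eq_fun (measurable_pi_apply 1) measurable_const
  refine ⟨_, hT.compl, jumpMeasure_eq_zero hT.compl fun s _ hs => hs rfl, ?_⟩
  rw [compl_compl]
  simpa [ae_iff] using ae_apply_one_ne_zero

lemma ae_mnorm_jumpDensity (hJ : Continuous J) :
    ∀ᵐ x ∂jumpMeasure J, mnorm (jumpDensity J x) = 1 := by
  have hmeas : Measurable fun x => mnorm (jumpDensity J x) := by
    have hentry := measurable_jumpDensity_apply hJ
    unfold mnorm
    fun_prop
  rw [jumpMeasure, ae_map_iff measurable_vecCons_zero.aemeasurable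
    (measurableSet_eq_fun hmeas measurable_const), ae_withDensity_iff (measurable_ofReal_vnorm hJ)]
  refine .of_forall fun s hs => ?_
  rw [jumpDensity, mnorm_outer_e2]
  exact vnorm_inv_vnorm_smul fun h => hs (by simpa using h.le)

lemma integral_mul_jumpDensity (hJ : Continuous J) {φ : V2 → ℝ} (hφ : Continuous φ)
    (hφ0 : ∀ s ∉ Ioo (0 : ℝ) 1, φ ![s, 0] = 0) (i j : Fin 2) :
    ∫ x, φ x * jumpDensity J x i j ∂jumpMeasure J = e2 j * ∫ s, φ ![s, 0] * J s i := by
  have hmeas : Measurable fun x => φ x * jumpDensity J x i j :=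
    hφ.measurable.mul (measurable_jumpDensity_apply hJ i j)
  have hsupp : ∫ s in Ioo (0 : ℝ) 1, e2 j * (φ ![s, 0] * J s i) =
      ∫ s, e2 j * (φ ![s, 0] * J s i) :=
    setIntegral_eq_integral_of_forall_compl_eq_zero fun s hs => by
      rw [hφ0 s hs, zero_mul, mul_zero]
  rw [jumpMeasure, integral_map measurable_vecCons_zero.aemeasurable hmeas.aestronglyMeasurable,
    integral_withDensity_eq_integral_toReal_smul (measurable_ofReal_vnorm hJ)
      (.of_forall fun s => ENNReal.ofReal_lt_top), ← integral_const_mul, ← hsupp]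
  congr 1 with s
  have hpolar : vnorm (J s) * ((vnorm (J s))⁻¹ * J s i) = J s i :=
    congrFun (vnorm_smul_inv_vnorm_smul (J s)) i
  rw [ENNReal.toReal_ofReal (show 0 ≤ vnorm (J s) from Real.sqrt_nonneg _)]
  simp only [jumpDensity, outer, Matrix.of_apply, Pi.smul_apply, smul_eq_mul,
    Matrix.cons_val_zero]
  linear_combination φ ![s, 0] * e2 j * hpolar

end JumpMeasure

section PiecewiseSmooth

/-- The classical Jacobian matrix of a map of the plane. -/
def jacobian (w : V2 → V2) (x : V2) : Mat2 := Matrix.of fun i j => pd j (fun y => w y i) x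

lemma continuous_jacobian_apply {w : V2 → V2} (hw : ContDiff ℝ 1 w) (i j : Fin 2) :
    Continuous fun x => jacobian w x i j :=
  continuous_pd (contDiff_pi.1 hw i) j

lemma integrableOn_Rect_ite {f g : V2 → ℝ} (hf : Continuous f) (hg : Continuous g) :
    IntegrableOn (fun x => if 0 ≤ x 1 then f x else g x) Rect :=
  Integrable.piecewise (s := upperHalf) measurableSet_upperHalf
    (integrableOn_Rect_of_continuous hf).integrableOn
    (integrableOn_Rect_of_continuous hg).integrableOn

lemma hasBVDerivOn_Rect_of_piecewise {u wp wm : V2 → V2} (hwp : ContDiff ℝ 1 wp)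
    (hwm : ContDiff ℝ 1 wm)
    (hu : ∀ᵐ x ∂(volume.restrict Rect), u x = if 0 ≤ x 1 then wp x else wm x) :
    HasBVDerivOn Rect u (fun x => if 0 ≤ x 1 then jacobian wp x else jacobian wm x)
      (jumpMeasure fun s => wp ![s, 0] - wm ![s, 0])
      (jumpDensity fun s => wp ![s, 0] - wm ![s, 0]) := by
  have hJ : Continuous fun s : ℝ => wp ![s, 0] - wm ![s, 0] :=
    (hwp.continuous.comp (by fun_prop)).sub (hwm.continuous.comp (by fun_prop))
  have hui : ∀ i, ∀ᵐ x ∂(volume.restrict Rect), u x i = if 0 ≤ x 1 then wp x i else wm x i :=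
    fun i => hu.mono fun x hx => by rw [hx]; split_ifs <;> rfl
  have hgrad : ∀ x i j, (if 0 ≤ x 1 then jacobian wp x else jacobian wm x) i j =
      if 0 ≤ x 1 then pd j (fun y => wp y i) x else pd j (fun y => wm y i) x := fun x i j => by
    split_ifs <;> rfl
  refine ⟨?_, ?_, jumpMeasure_univ_ne_top hJ, ?_, jumpMeasure_mutuallySingular, fun i j =>
    (measurable_jumpDensity_apply hJ i j).aemeasurable, ae_mnorm_jumpDensity hJ, ?_⟩
  · refine Integrable.of_eval fun i => (integrableOn_Rect_ite ?_ ?_).congr <|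
      (hui i).mono fun x hx => hx.symm
    · exact (contDiff_pi.1 hwp i).continuous
    · exact (contDiff_pi.1 hwm i).continuous
  · intro i j
    simp only [hgrad]
    exact integrableOn_Rect_ite (continuous_jacobian_apply hwp i j)
      (continuous_jacobian_apply hwm i j)
  · exact jumpMeasure_eq_zero isOpen_Rect.measurableSet.compl fun s hs hsR => hsR
      ⟨hs, by simp⟩
  · intro φ hφ hc hs i j
    have hφ0 : ∀ s ∉ Ioo (0 : ℝ) 1, φ ![s, 0] = 0 := fun s hs' =>
      image_eq_zero_of_notMem_tsupport fun h => hs' (hs h).1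
    simp only [hgrad]
    rw [integral_congr_ae ((hui i).mono fun x hx => by rw [hx]), setIntegral_mul_pd hs,
      setIntegral_testFunction_mul hs, integral_mul_jumpDensity hJ hφ.continuous hφ0]
    exact integral_ite_mul_pd (contDiff_pi.1 hwp i) (contDiff_pi.1 hwm i)
      (hφ.of_le (by norm_cast)) hc j

end PiecewiseSmooth

lemma exists_tendsto_zero_setIntegral_add_eq {X E : Type*} [MeasurableSpace X] {μ : Measure X}
    [NormedAddCommGroup E] [NormedSpace ℝ E] [CompleteSpace E] {Ω : Set X} (hΩ0 : μ Ω ≠ 0)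
    (hΩ : μ Ω ≠ ⊤) {v : ℕ → X → E} {u : X → E} {C : ℝ} (hv : ∀ n, IntegrableOn (v n) Ω μ)
    (hbound : ∀ n, ∀ᵐ x ∂(μ.restrict Ω), ‖v n x‖ ≤ C)
    (hlim : ∀ᵐ x ∂(μ.restrict Ω), Tendsto (fun n => v n x) atTop (𝓝 (u x))) :
    ∃ c : ℕ → E, Tendsto c atTop (𝓝 0) ∧
      ∀ n, ∫ x in Ω, (v n x + c n) ∂μ = ∫ x in Ω, u x ∂μ := by
  have hmean : Tendsto (fun n => ∫ x in Ω, v n x ∂μ) atTop (𝓝 (∫ x in Ω, u x ∂μ)) :=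
    tendsto_integral_of_dominated_convergence (fun _ => C)
      (fun n => (hv n).aestronglyMeasurable) (integrableOn_const hΩ) hbound hlim
  refine ⟨fun n => (μ.real Ω)⁻¹ • ((∫ x in Ω, u x ∂μ) - ∫ x in Ω, v n x ∂μ), ?_, fun n => ?_⟩
  · simpa using (hmean.const_sub (∫ x in Ω, u x ∂μ)).const_smul (μ.real Ω)⁻¹
  · have hreal : μ.real Ω ≠ 0 := ENNReal.toReal_ne_zero.2 ⟨hΩ0, hΩ⟩
    rw [integral_add (hv n) (integrableOn_const hΩ), setIntegral_const]
    simp only [smul_inv_smul₀ hreal, add_sub_cancel]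

lemma contDiff_mulVec_add (R : Mat2) (b : V2) : ContDiff ℝ 1 fun x => R.mulVec x + b :=
  R.mulVecLin.toContinuousLinearMap.contDiff.add contDiff_const

namespace ShearStack

variable (S : ShearStack) {h : ℕ → ℝ} {b : V2} {u : V2 → V2}

lemma setIntegral_abs_gradient_le {h H : ℝ} (hh : 0 < h) (hH : h ≤ H) (i j : Fin 2) :
    ∫ x in Rect, |(S.rotation h x * (1 + S.shear h x • outer e1 e2)) i j| ≤
      volume.real Rect + S.height * (S.bound * (1 + H)) := by
  have hone : IntegrableOn (fun _ => (1 : ℝ)) Rect := integrableOn_const volume_Rect_lt_top.ne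
  have hshear : IntegrableOn (fun x => |S.shear h x|) Rect := (S.integrableOn_shear hh).abs
  calc ∫ x in Rect, |(S.rotation h x * (1 + S.shear h x • outer e1 e2)) i j|
      ≤ ∫ x in Rect, (1 + |S.shear h x|) :=
        integral_mono ((S.isSobolev11On_deformation hh 0).int_gu i j).abs (hone.add hshear)
          fun x => abs_mul_one_add_smul_outer_apply_le (S.rot_mem_SO2 _) _ i j
    _ = volume.real Rect + ∫ x in Rect, |S.shear h x| := by
        rw [integral_add hone hshear, setIntegral_const, smul_eq_mul, mul_one]
    _ ≤ volume.real Rect + S.height * (S.bound * (1 + H)) := by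
        gcongr
        exact S.setIntegral_abs_shear_le hh hH

variable {S}

lemma ae_tendsto_deformation (hpos : ∀ n, 0 < h n) (hh : Tendsto h atTop (𝓝 0))
    (hu : ∀ᵐ x ∂(volume.restrict Rect), u x = S.limit b x) :
    ∀ᵐ x ∂(volume.restrict Rect),
      Tendsto (fun n => S.deformation (h n) b x) atTop (𝓝 (u x)) := by
  filter_upwards [hu, ae_restrict_mem isOpen_Rect.measurableSet,
    ae_restrict_of_ae ae_apply_one_ne_zero] with x hux hxR hx1
  rw [hux]
  exact (S.tendsto_deformation b hxR.1.1.le hx1).comp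
    (tendsto_nhdsWithin_iff.2 ⟨hh, .of_forall hpos⟩)

lemma weakStarToBV_deformation (hpos : ∀ n, 0 < h n) (hh : Tendsto h atTop (𝓝 0))
    (hu : ∀ᵐ x ∂(volume.restrict Rect), u x = S.limit b x)
    {c : ℕ → V2} (hc : Tendsto c atTop (𝓝 0)) :
    WeakStarToBV Rect (fun n => S.deformation (h n) (b + c n)) u := by
  obtain ⟨H, hH⟩ := hh.bddAbove_range
  obtain ⟨D, hD⟩ := hc.norm.bddAbove_range
  have hH' : ∀ n, h n ≤ H := fun n => hH ⟨n, rfl⟩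
  refine weakStarToBV_of_bounded isOpen_Rect volume_Rect_lt_top.ne
    (hasBVDerivOn_Rect_of_piecewise
      (by simpa only [add_assoc] using contDiff_mulVec_add _ (b + S.totalSlip))
      (contDiff_mulVec_add _ b) hu)
    (fun n => S.isSobolev11On_deformation (hpos n) _)
    (fun n i j => S.setIntegral_abs_gradient_le (hpos n) (hH' n) i j)
    (C := ‖b‖ + 1 + (1 + S.bound * (1 + H) * S.height) + D) (fun n => ?_) ?_
  · filter_upwards [ae_restrict_mem isOpen_Rect.measurableSet] with x hx
    rw [deformation_add]
    exact norm_add_le_of_le (S.norm_deformation_le (hpos n) (hH' n) b hx) (hD ⟨n, rfl⟩)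
  · filter_upwards [ae_tendsto_deformation hpos hh hu] with x hx
    simpa only [deformation_add, add_zero] using hx.add hc

lemma exists_tendsto_zero_setIntegral_deformation_eq (hpos : ∀ n, 0 < h n)
    (hh : Tendsto h atTop (𝓝 0))
    (hu : ∀ᵐ x ∂(volume.restrict Rect), u x = S.limit b x) :
    ∃ c : ℕ → V2, Tendsto c atTop (𝓝 0) ∧
      ∀ n, ∫ x in Rect, S.deformation (h n) (b + c n) x = ∫ x in Rect, u x := by
  obtain ⟨H, hH⟩ := hh.bddAbove_range
  simp only [deformation_add]
  refine exists_tendsto_zero_setIntegral_add_eq volume_Rect_ne_zero volume_Rect_lt_top.ne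
    (C := ‖b‖ + 1 + (1 + S.bound * (1 + H) * S.height))
    (fun n => (S.isSobolev11On_deformation (hpos n) b).int_u) (fun n => ?_)
    (ae_tendsto_deformation hpos hh hu)
  filter_upwards [ae_restrict_mem isOpen_Rect.measurableSet] with x hx
  exact S.norm_deformation_le (hpos n) (hH ⟨n, rfl⟩) b hx

end ShearStack

/-- Lemma 4.3: approximation of maps in `A ∩ SBV_∞` with a single jump.
Let `Ω = (0,1) × (−1,1)` and `u(x) = R(x₂)x + ψ(x₂)` with `R ≡ R⁺`, `ψ ≡ ψ⁺` for `x₂ ∈ [0,1)`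
and `R ≡ R⁻`, `ψ ≡ ψ⁻` for `x₂ ∈ (−1,0)`, where `R^± ∈ SO(2)`, `ψ^± ∈ ℝ²`. Then there is a
sequence `u_ε ∈ A_ε` with `∫_Ω u_ε = ∫_Ω u` and `u_ε ⇀* u` in `BV(Ω;ℝ²)`. -/
theorem single_jump_approx
    (lam : ℝ) (hlam : lam ∈ Ioo (0:ℝ) 1)
    (ε : ℕ → ℝ) (hεpos : ∀ n, 0 < ε n) (hε0 : Tendsto ε atTop (𝓝 0))
    (Rp Rm : Mat2) (hRp : Rp ∈ SO2) (hRm : Rm ∈ SO2) (ψp ψm : V2)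
    (u : V2 → V2)
    (hform : ∀ᵐ x ∂(volume.restrict Rect),
      u x = ((if 0 ≤ x 1 then Rp else Rm).mulVec x) + (if 0 ≤ x 1 then ψp else ψm)) :
    ∃ un : ℕ → V2 → V2, ∃ Rn : ℕ → V2 → Mat2, ∃ γn : ℕ → V2 → ℝ,
      (∀ n, MemAeps Rect lam (ε n) (un n) (Rn n) (γn n)) ∧
      (∀ n, (∫ x in Rect, un n x) = ∫ x in Rect, u x) ∧
      WeakStarToBV Rect un u := by
  obtain ⟨S, hheight, hbottom, htop, hslip⟩ := exists_shearStack hRm hRp (ψp - ψm)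
  have hheight' : (0 : ℝ) < S.height := by exact_mod_cast hheight
  have hpos : ∀ n, 0 < lam * ε n / S.height := fun n =>
    div_pos (mul_pos hlam.1 (hεpos n)) hheight'
  have hlim : Tendsto (fun n => lam * ε n / S.height) atTop (𝓝 0) := by
    simpa using (hε0.const_mul lam).div_const (S.height : ℝ)
  have hu : ∀ᵐ x ∂(volume.restrict Rect), u x = S.limit ψm x := by
    filter_upwards [hform] with x hx
    rw [hx, ShearStack.limit, hbottom, htop, hslip, add_assoc, add_sub_cancel]
    split_ifs <;> rfl
  obtain ⟨c, hc, hmean⟩ := ShearStack.exists_tendsto_zero_setIntegral_deformation_eq hpos hlim hu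
  exact ⟨fun n => S.deformation (lam * ε n / S.height) (ψm + c n), fun n => S.rotation _,
    fun n => S.shear _, fun n => S.memAeps_deformation hlam.2.le (hεpos n) (hpos n)
      (mul_div_cancel₀ _ hheight'.ne').le _, hmean,
    ShearStack.weakStarToBV_deformation hpos hlim hu hc⟩

end
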